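/- There exists an absolute constant γ₀ > 0 such that for every constant ε ∈ (0,1) and every ρ > 0 there exists m₀ such that for all m ≥ m₀ and all r with 1 ≤ r < γ₀·m the following holds. Set K = ⌊(1-ε)·binom(m,≤r)⌋ and let Z be a uniformly random K-element subset of F₂^m. Then 2^{-K} ≤ E[ |I_r(Z)| / 2^{binom(m,≤r)} ] ≤ 2^{-K}·(1 + ρ), where |I_r(Z)| denotes the number of polynomials in I_r(Z). -/

import Mathlib

/-- `binomLe m r = ∑_{i=0}^r C(m,i)`, written `binom(m, ≤ r)`. -/
def binomLe (m r : ℕ) : ℕ := ∑ i ∈ Finset.range (r + 1), Nat.choose m i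

/-- Index type for multilinear monomials of degree at most `r` in `m` variables:
subsets `S ⊆ {1,…,m}` with `|S| ≤ r`. -/
abbrev MonIdx (m r : ℕ) := {S : Finset (Fin m) // S.card ≤ r}

/-- `RM(m,r)` as the space of coefficient vectors of multilinear polynomials in `m`
variables of total degree at most `r` over `F₂`. -/
abbrev RMcode (m r : ℕ) := MonIdx m r → ZMod 2

/-- Evaluation of a polynomial (given by its coefficients) at the point `z`,
as a linear map: `c ↦ ∑_{|S| ≤ r} c_S ∏_{i ∈ S} z_i`. -/
def evalLin (m r : ℕ) (z : Fin m → ZMod 2) : RMcode m r →ₗ[ZMod 2] ZMod 2 :=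
  ∑ S : MonIdx m r, (∏ i ∈ S.1, z i) • LinearMap.proj S

/-- The degree-`r` vanishing space `I_r(Z)` of the set `Z ⊆ F₂^m`. -/
def vanishing (m r : ℕ) (Z : Set (Fin m → ZMod 2)) : Submodule (ZMod 2) (RMcode m r) :=
  ⨅ z ∈ Z, LinearMap.ker (evalLin m r z)

/-- The vector `z^{(r)}` of evaluations at `z` of all multilinear monomials of degree `≤ r`. -/
def monVec (m r : ℕ) (z : Fin m → ZMod 2) : MonIdx m r → ZMod 2 := fun S => ∏ i ∈ S.1, z i

/-- Fractional Hamming weight of the polynomial with coefficients `c`. -/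
noncomputable def wt (m r : ℕ) (c : RMcode m r) : ℝ :=
  ((Finset.univ.filter (fun z : Fin m → ZMod 2 => evalLin m r z c ≠ 0)).card : ℝ) / 2 ^ m

/-- The number of zeros in `F₂^m` of the polynomial with coefficients `c`,
i.e. `(1 - wt(P)) · 2^m`. -/
def numZeros (m r : ℕ) (c : RMcode m r) : ℕ :=
  (Finset.univ.filter (fun z : Fin m → ZMod 2 => evalLin m r z c = 0)).card

/-- The degree-`r` closure of `Z ⊆ F₂^m`. -/
def closureSet (m r : ℕ) (Z : Set (Fin m → ZMod 2)) : Set (Fin m → ZMod 2) :=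
  {u | ∀ c ∈ vanishing m r Z, evalLin m r u c = 0}

open Finset

section Degree

variable {G : Type*} [AddCommGroup G]

/-- The discrete derivative of an `F₂`-valued function in direction `y`. -/
def fdiff (y : G) : (G → ZMod 2) →ₗ[ZMod 2] (G → ZMod 2) where
  toFun P x := P (x + y) + P x
  map_add' P Q := by ext x; simp only [Pi.add_apply]; ring
  map_smul' a P := by ext x; simp only [Pi.smul_apply, smul_eq_mul, RingHom.id_apply]; ring

theorem fdiff_apply (y : G) (P : G → ZMod 2) (x : G) : fdiff y P x = P (x + y) + P x := rfl

variable (G) in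
/-- The `F₂`-valued functions all of whose `(r+1)`-fold derivatives vanish. -/
def degLE : ℕ → Submodule (ZMod 2) (G → ZMod 2)
  | 0 => ⨅ y : G, LinearMap.ker (fdiff y)
  | r + 1 => ⨅ y : G, (degLE r).comap (fdiff y)

theorem mem_degLE_zero {P : G → ZMod 2} : P ∈ degLE G 0 ↔ ∀ y, fdiff y P = 0 := by
  simp [degLE]

theorem mem_degLE_succ {r : ℕ} {P : G → ZMod 2} :
    P ∈ degLE G (r + 1) ↔ ∀ y, fdiff y P ∈ degLE G r := by
  simp [degLE]

theorem ZMod.two_add_eq_zero_iff (a b : ZMod 2) : a + b = 0 ↔ a = b := by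
  revert a b; decide

theorem eq_const_of_mem_degLE_zero {P : G → ZMod 2} (h : P ∈ degLE G 0) (x : G) : P x = P 0 := by
  have := congrFun (mem_degLE_zero.1 h x) 0
  rw [fdiff_apply, zero_add] at this
  exact (ZMod.two_add_eq_zero_iff _ _).1 this

theorem degLE_le_succ (r : ℕ) : degLE G r ≤ degLE G (r + 1) := by
  induction r with
  | zero =>
    intro P hP
    rw [mem_degLE_succ]
    intro y
    rw [mem_degLE_zero.1 hP y]
    exact zero_mem _
  | succ r ih =>
    intro P hP
    rw [mem_degLE_succ] at hP ⊢
    exact fun y => ih (hP y)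

theorem degLE_mono : Monotone (degLE G) := monotone_nat_of_le_succ degLE_le_succ

theorem comp_mem_degLE {H : Type*} [AddCommGroup H] (L : H →+ G) {r : ℕ} {P : G → ZMod 2}
    (hP : P ∈ degLE G r) (a : G) : (fun x => P (L x + a)) ∈ degLE H r := by
  have key (Q : G → ZMod 2) (y : H) :
      fdiff y (fun x => Q (L x + a)) = fun x => fdiff (L y) Q (L x + a) := by
    ext x
    simp only [fdiff_apply, map_add]
    rw [add_right_comm]
  induction r generalizing P with
  | zero =>
    rw [mem_degLE_zero] at hP ⊢
    intro y
    rw [key, hP]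
    rfl
  | succ r ih =>
    rw [mem_degLE_succ] at hP ⊢
    intro y
    rw [key]
    exact ih (hP _)

theorem mul_mem_degLE (l : G →+ ZMod 2) {r : ℕ} {P : G → ZMod 2} (hP : P ∈ degLE G r) :
    (fun x => l x * P x) ∈ degLE G (r + 1) := by
  have key (y : G) : fdiff y (fun x => l x * P x) =
      (fun x => l x * fdiff y P x) + l y • fun x => P (x + y) := by
    ext x
    simp only [fdiff_apply, map_add, Pi.add_apply, Pi.smul_apply, smul_eq_mul]
    ring
  have shift (y : G) : (fun x => P (x + y)) ∈ degLE G r := comp_mem_degLE (AddMonoidHom.id G) hP y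
  induction r generalizing P with
  | zero =>
    rw [mem_degLE_succ]
    intro y
    rw [key, mem_degLE_zero.1 hP y]
    refine add_mem ?_ (Submodule.smul_mem _ _ (shift y))
    have h0 : (fun x => l x * (0 : G → ZMod 2) x) = 0 := by ext; simp
    exact h0 ▸ zero_mem _
  | succ r ih =>
    rw [mem_degLE_succ]
    intro y
    rw [key]
    refine add_mem ?_ (Submodule.smul_mem _ _ (shift y))
    have hd := mem_degLE_succ.1 hP y
    refine ih hd (fun z => ?_) (fun z => comp_mem_degLE (AddMonoidHom.id G) hd z)
    ext x
    simp only [fdiff_apply, map_add, Pi.add_apply, Pi.smul_apply, smul_eq_mul]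
    ring

variable [Fintype G]

/-- The number of nonzero values of an `F₂`-valued function. -/
def suppCard (P : G → ZMod 2) : ℕ := #{x | P x ≠ 0}

theorem suppCard_add_le {H : Type*} [Fintype H] (P Q : H → ZMod 2) :
    suppCard (P + Q) ≤ suppCard P + suppCard Q := by
  classical
  refine (card_le_card ?_).trans (card_union_le _ _)
  intro x
  simp only [mem_filter, mem_univ, true_and, mem_union, Pi.add_apply]
  contrapose!
  rintro ⟨h, h'⟩
  simp [h, h']

theorem suppCard_shift (P : G → ZMod 2) (y : G) : suppCard (fun x => P (x + y)) = suppCard P := by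
  refine card_bij (fun x _ => x + y) ?_ ?_ ?_
  · simp
  · simp
  · intro b hb
    exact ⟨b - y, by simpa using hb, by simp⟩

theorem suppCard_fdiff_le (P : G → ZMod 2) (y : G) : suppCard (fdiff y P) ≤ 2 * suppCard P := by
  have := suppCard_add_le (fun x => P (x + y)) P
  rw [suppCard_shift] at this
  have h : fdiff y P = (fun x => P (x + y)) + P := rfl
  rw [h]
  lia

theorem eq_zero_of_suppCard_lt {r : ℕ} {P : G → ZMod 2} (hP : P ∈ degLE G r)
    (h : suppCard P * 2 ^ r < Fintype.card G) : P = 0 := by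
  have const {Q : G → ZMod 2} (hQ : Q ∈ degLE G 0) (h : suppCard Q < Fintype.card G) : Q = 0 := by
    by_contra hne
    have h0 : Q 0 ≠ 0 := fun h0 => hne <| by
      ext x
      rw [eq_const_of_mem_degLE_zero hQ, h0]
      rfl
    refine h.ne ?_
    rw [suppCard, filter_true_of_mem, card_univ]
    intro x _
    rwa [eq_const_of_mem_degLE_zero hQ]
  induction r generalizing P with
  | zero => exact const hP (by simpa using h)
  | succ r ih =>
    refine const (mem_degLE_zero.2 fun y => ih (mem_degLE_succ.1 hP y) ?_) ?_
    · calc suppCard (fdiff y P) * 2 ^ r ≤ 2 * suppCard P * 2 ^ r := by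
            gcongr; exact suppCard_fdiff_le P y
        _ = suppCard P * 2 ^ (r + 1) := by ring
        _ < _ := h
    · exact lt_of_le_of_lt (Nat.le_mul_of_pos_right _ (by positivity)) h

/-- The character `(-1)^a`. -/
def sgn (a : ZMod 2) : ℝ := if a = 0 then 1 else -1

theorem sgn_add (a b : ZMod 2) : sgn (a + b) = sgn a * sgn b := by
  have h : ∀ a : ZMod 2, a = 0 ∨ a = 1 := by decide
  have h2 : (1 : ZMod 2) + 1 = 0 := by decide
  rcases h a with rfl | rfl <;> rcases h b with rfl | rfl <;> simp [sgn, h2]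

theorem sgn_sq (a : ZMod 2) : sgn a ^ 2 = 1 := by
  unfold sgn; split_ifs <;> norm_num

/-- The average of `(-1)^P`. -/
noncomputable def bias (P : G → ZMod 2) : ℝ := (∑ x, sgn (P x)) / Fintype.card G

theorem sum_sgn {H : Type*} [Fintype H] (P : H → ZMod 2) :
    ∑ x, sgn (P x) = Fintype.card H - 2 * (suppCard P : ℝ) := by
  have : ∀ x, sgn (P x) = 1 - 2 * (if P x ≠ 0 then 1 else 0) := by
    intro x
    unfold sgn
    by_cases h : P x = 0
    · simp [h]
    · simp [h]; norm_num
  simp_rw [this, sum_sub_distrib, ← mul_sum, sum_boole]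
  simp [suppCard]

theorem bias_mul_card (P : G → ZMod 2) : bias P * Fintype.card G = ∑ x, sgn (P x) := by
  rw [bias, div_mul_cancel₀]
  exact Nat.cast_ne_zero.2 Fintype.card_ne_zero

theorem suppCard_eq (P : G → ZMod 2) :
    (suppCard P : ℝ) = (1 - bias P) / 2 * Fintype.card G := by
  have h1 := bias_mul_card P
  have h2 := sum_sgn P
  linarith

theorem bias_le_one (P : G → ZMod 2) : bias P ≤ 1 := by
  have h := suppCard_eq P
  have hN : (0 : ℝ) < Fintype.card G := Nat.cast_pos.2 Fintype.card_pos
  by_contra hb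
  push Not at hb
  have : (1 - bias P) / 2 * Fintype.card G < 0 := mul_neg_of_neg_of_pos (by linarith) hN
  have h0 : (0 : ℝ) ≤ suppCard P := Nat.cast_nonneg _
  linarith

theorem bias_ge_neg_one (P : G → ZMod 2) : -1 ≤ bias P := by
  have h := suppCard_eq P
  have hN : (0 : ℝ) < Fintype.card G := Nat.cast_pos.2 Fintype.card_pos
  have h0 : (suppCard P : ℝ) ≤ Fintype.card G := by
    exact_mod_cast card_le_univ _
  by_contra hb
  push Not at hb
  nlinarith

theorem eq_zero_of_bias_pos_of_mem_degLE_one {P : G → ZMod 2} (hP : P ∈ degLE G 1)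
    (hb : 0 < bias P) : P = 0 := by
  have h0 : P ∈ degLE G 0 := by
    rw [mem_degLE_zero]
    intro y
    have hc := eq_const_of_mem_degLE_zero (mem_degLE_succ.1 hP y)
    by_contra hne
    have h1 : ∀ x, fdiff y P x = 1 := by
      have h01 : ∀ a : ZMod 2, a ≠ 0 → a = 1 := by decide
      intro x
      apply h01
      intro hx
      apply hne
      ext z
      rw [hc z, ← hc x, hx]
      rfl
    have hs : ∑ x, sgn (P x) = -∑ x, sgn (P x) := by
      have : ∑ x, sgn (P (x + y)) = ∑ x, sgn (P x) :=
        Equiv.sum_comp (Equiv.addRight y) fun x => sgn (P x)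
      nth_rw 1 [← this]
      rw [← sum_neg_distrib]
      refine sum_congr rfl fun x _ => ?_
      have hx : sgn (P (x + y) + P x) = -1 := by
        have := h1 x
        rw [fdiff_apply] at this
        rw [this]
        simp [sgn]
      rw [sgn_add] at hx
      have := sgn_sq (P x)
      linear_combination sgn (P x) * hx - sgn (P (x + y)) * this
    have : bias P = 0 := by
      rw [bias, (by linarith : ∑ x, sgn (P x) = 0), zero_div]
    linarith
  refine eq_zero_of_suppCard_lt h0 ?_
  have hN : (0 : ℝ) < Fintype.card G := Nat.cast_pos.2 Fintype.card_pos
  have := suppCard_eq P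
  rw [pow_zero, mul_one]
  have : (suppCard P : ℝ) < Fintype.card G := by nlinarith
  exact_mod_cast this

/-- The average of `F` over the translates by the subset sums of a list. -/
noncomputable def cubeAvg : List G → (G → ℝ) → G → ℝ
  | [], F => F
  | y :: ys, F => fun x => (cubeAvg ys F x + cubeAvg ys F (x + y)) / 2

theorem sum_shift (F : G → ℝ) (y : G) : ∑ x, F (x + y) = ∑ x, F x :=
  Equiv.sum_comp (Equiv.addRight y) F

theorem sum_cubeAvg (ys : List G) (F : G → ℝ) : ∑ x, cubeAvg ys F x = ∑ x, F x := by
  induction ys with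
  | nil => rfl
  | cons y ys ih =>
    simp only [cubeAvg]
    rw [← sum_div, sum_add_distrib, sum_shift (cubeAvg ys F) y, ih]
    ring

theorem exists_sum_sq_half_le (H : G → ℝ) (h0 : ∑ x, H x = 0) :
    ∃ y, ∑ x, ((H x + H (x + y)) / 2) ^ 2 ≤ (∑ x, H x ^ 2) / 2 := by
  suffices h : ∑ y : G, ∑ x, ((H x + H (x + y)) / 2) ^ 2 ≤ ∑ _y : G, (∑ x, H x ^ 2) / 2 by
    obtain ⟨y, -, hy⟩ := exists_le_of_sum_le univ_nonempty h
    exact ⟨y, hy⟩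
  have e (y : G) : ∑ x, ((H x + H (x + y)) / 2) ^ 2 =
      (∑ x, H x ^ 2) / 2 + (∑ x, H x * H (x + y)) / 2 := by
    have : ∑ x, H (x + y) ^ 2 = ∑ x, H x ^ 2 := sum_shift (fun x => H x ^ 2) y
    calc _ = ∑ x, (H x ^ 2 / 4 + H (x + y) ^ 2 / 4 + H x * H (x + y) / 2) :=
          sum_congr rfl fun x _ => by ring
      _ = (∑ x, H x ^ 2) / 4 + (∑ x, H (x + y) ^ 2) / 4 + (∑ x, H x * H (x + y)) / 2 := by
          simp only [sum_add_distrib, sum_div]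
      _ = _ := by rw [this]; ring
  have cross : ∑ y : G, ∑ x, H x * H (x + y) = 0 := by
    rw [sum_comm]
    refine sum_eq_zero fun x _ => ?_
    have hx : ∑ y, H (x + y) = 0 := (Equiv.sum_comp (Equiv.addLeft x) H).trans h0
    rw [← mul_sum, hx, mul_zero]
  simp_rw [e]
  rw [sum_add_distrib, ← sum_div univ (fun y => ∑ x, H x * H (x + y)), cross]
  simp

theorem exists_cubeAvg_variance_le (F : G → ℝ) (b : ℝ) (hb : ∑ x, F x = b * Fintype.card G)
    (t : ℕ) : ∃ ys : List G, ys.length = t ∧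
      ∑ x, (cubeAvg ys F x - b) ^ 2 ≤ (∑ x, (F x - b) ^ 2) / 2 ^ t := by
  induction t with
  | zero => exact ⟨[], rfl, by simp [cubeAvg]⟩
  | succ t ih =>
    obtain ⟨ys, hl, hv⟩ := ih
    obtain ⟨y, hy⟩ := exists_sum_sq_half_le (fun x => cubeAvg ys F x - b) (by
      rw [sum_sub_distrib, sum_cubeAvg, hb]
      simp [mul_comm])
    refine ⟨y :: ys, by simp [hl], ?_⟩
    calc _ = ∑ x, ((cubeAvg ys F x - b + (cubeAvg ys F (x + y) - b)) / 2) ^ 2 :=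
          sum_congr rfl fun x _ => by simp only [cubeAvg]; ring
      _ ≤ _ := hy
      _ ≤ (∑ x, (F x - b) ^ 2) / 2 ^ t / 2 := by gcongr
      _ = _ := by rw [pow_succ]; field_simp

theorem cubeAvg_mul_of_invariant {H : Type*} [AddCommGroup H] (ys : List H) (F R : H → ℝ)
    (hR : ∀ y ∈ ys, ∀ x, R (x + y) = R x) (x : H) :
    cubeAvg ys (fun x => F x * R x) x = cubeAvg ys F x * R x := by
  induction ys generalizing x with
  | nil => rfl
  | cons y ys ih =>
    have ih' := ih fun z hz => hR z (List.mem_cons_of_mem _ hz)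
    simp only [cubeAvg]
    rw [ih', ih', hR y List.mem_cons_self]
    ring

/-- The number of points at which the directional average of `(-1)^P` is not positive. -/
noncomputable def badCard (ys : List G) (P : G → ZMod 2) : ℕ :=
  #{x | cubeAvg ys (fun x => sgn (P x)) x ≤ 0}

theorem exists_badCard_le (P : G → ZMod 2) (hb : 0 < bias P) (t : ℕ) :
    ∃ ys : Fin t → G, (badCard (List.ofFn ys) P : ℝ) * bias P ^ 2 ≤
      (1 - bias P ^ 2) * Fintype.card G / 2 ^ t := by
  obtain ⟨ys, rfl, hv⟩ := exists_cubeAvg_variance_le (fun x => sgn (P x)) (bias P)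
    (bias_mul_card P).symm t
  refine ⟨ys.get, ?_⟩
  rw [List.ofFn_get]
  have e : ∑ x, (sgn (P x) - bias P) ^ 2 = (1 - bias P ^ 2) * Fintype.card G := by
    calc _ = ∑ x, (1 + bias P ^ 2 - 2 * bias P * sgn (P x)) :=
          sum_congr rfl fun x _ => by linear_combination sgn_sq (P x)
      _ = _ := by
          rw [sum_sub_distrib, ← mul_sum, ← bias_mul_card]
          simp
          ring
  rw [e] at hv
  refine le_trans ?_ hv
  rw [badCard, ← nsmul_eq_mul, ← sum_const]
  refine (sum_le_sum fun x hx => ?_).trans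
    (sum_le_sum_of_subset_of_nonneg (filter_subset _ _) fun _ _ _ => sq_nonneg _)
  have := (mem_filter.1 hx).2
  nlinarith

theorem suppCard_sub_le_of_fdiff_eq {t : ℕ} (ys : Fin t → G) (P Q : G → ZMod 2)
    (h : ∀ i, fdiff (ys i) P = fdiff (ys i) Q) :
    suppCard (P + Q) ≤ badCard (List.ofFn ys) P + badCard (List.ofFn ys) Q := by
  classical
  have hinv : ∀ y ∈ List.ofFn ys, ∀ x, sgn ((P + Q) (x + y)) = sgn ((P + Q) x) := by
    intro y hy x
    obtain ⟨i, rfl⟩ := (List.mem_ofFn' _ _).1 hy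
    have := congrFun (h i) x
    simp only [fdiff_apply] at this
    congr 1
    simp only [Pi.add_apply]
    generalize P (x + ys i) = a at *
    generalize P x = b at *
    generalize Q (x + ys i) = c at *
    generalize Q x = d at *
    revert a b c d
    decide
  have hQ : (fun x => sgn (Q x)) = fun x => sgn (P x) * sgn ((P + Q) x) := by
    ext x
    rw [Pi.add_apply, sgn_add]
    linear_combination -sgn (Q x) * sgn_sq (P x)
  refine (card_le_card ?_).trans (card_union_le _ _)
  intro x
  simp only [mem_filter, mem_univ, true_and, mem_union]
  contrapose!
  rintro ⟨h1, h2⟩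
  rw [hQ, cubeAvg_mul_of_invariant _ _ _ hinv] at h2
  by_contra hne
  rw [sgn, if_neg hne] at h2
  linarith

open Classical in
theorem card_le_of_exists_badCard_le {t r e I W : ℕ} (S : Finset (G → ZMod 2))
    (hS : ∀ P ∈ S, P ∈ degLE G r)
    (hbad : ∀ P ∈ S, ∃ ys : Fin t → G, badCard (List.ofFn ys) P ≤ e)
    (hI : ∀ ys : Fin t → G, #(S.image fun P i => fdiff (ys i) P) ≤ I)
    (hW : #{P : G → ZMod 2 | P ∈ degLE G r ∧ suppCard P ≤ 2 * e} ≤ W) :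
    #S ≤ W * I * Fintype.card G ^ t := by
  choose! dir hdir using hbad
  have h1 := card_le_mul_card_image (f := dir) S (W * I) ?_
  · refine h1.trans (Nat.mul_le_mul_left _ ?_)
    calc #(S.image dir) ≤ Fintype.card (Fin t → G) := card_le_univ _
      _ = _ := by simp
  intro ys _
  refine (card_le_mul_card_image (f := fun P i => fdiff (ys i) P) _ W ?_).trans
    (Nat.mul_le_mul_left _ ((card_le_card (image_subset_image (filter_subset _ _))).trans (hI ys)))
  intro D hD
  obtain ⟨Q, hQ, rfl⟩ := mem_image.1 hD
  rw [mem_filter] at hQ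
  refine (card_le_card_of_injOn (fun P => P + Q) ?_ ?_).trans hW
  · intro P hP
    simp only [coe_filter, mem_filter, Set.mem_ofPred_eq] at hP
    obtain ⟨⟨hPS, hPd⟩, hPQ⟩ := hP
    simp only [coe_filter, mem_univ, true_and, Set.mem_ofPred_eq]
    refine ⟨add_mem (hS P hPS) (hS Q hQ.1), ?_⟩
    refine (suppCard_sub_le_of_fdiff_eq ys P Q fun i => congrFun hPQ i).trans ?_
    have h1 := hdir P hPS
    have h2 := hdir Q hQ.1
    rw [hPd] at h1
    rw [hQ.2] at h2
    lia
  · intro P _ P' _ hPP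
    simpa using hPP

end Degree

section Binomial

theorem binomLe_zero_right (m : ℕ) : binomLe m 0 = 1 := by simp [binomLe]

theorem binomLe_zero_left (r : ℕ) : binomLe 0 r = 1 := by
  rw [binomLe, sum_range_succ']
  simp

theorem binomLe_succ_succ (m r : ℕ) :
    binomLe (m + 1) (r + 1) = binomLe m (r + 1) + binomLe m r := by
  unfold binomLe
  rw [sum_range_succ' _ (r + 1), sum_range_succ' (fun i => m.choose i) (r + 1)]
  simp only [Nat.choose_succ_succ, sum_add_distrib, Nat.choose_zero_right]
  lia

theorem binomLe_mono_right (m : ℕ) : Monotone (binomLe m) := fun _ _ h =>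
  sum_le_sum_of_subset (range_mono (by lia))

theorem mul_binomLe_le_succ {m r c : ℕ} (h : c * (r + 1) ≤ m - r) :
    c * binomLe m r ≤ binomLe m (r + 1) := by
  unfold binomLe
  rw [sum_range_succ' _ (r + 1), mul_sum]
  refine le_add_right (sum_le_sum fun i hi => ?_)
  have hi' : i ≤ r := Nat.lt_succ_iff.1 (mem_range.1 hi)
  have e := Nat.choose_succ_right_eq m i
  have h1 : c * (i + 1) ≤ m - i := by
    calc c * (i + 1) ≤ c * (r + 1) := by gcongr
      _ ≤ m - r := h
      _ ≤ m - i := by lia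
  refine Nat.le_of_mul_le_mul_right (?_ : _ * (i + 1) ≤ _ * (i + 1)) (Nat.succ_pos i)
  rw [e]
  calc c * m.choose i * (i + 1) = m.choose i * (c * (i + 1)) := by ring
    _ ≤ _ := by gcongr

theorem mul_binomLe_succ_le (m r : ℕ) :
    binomLe (m + 1) r * (m + 1 - r) ≤ binomLe m r * (m + 1) := by
  unfold binomLe
  rw [sum_mul, sum_mul]
  refine sum_le_sum fun i hi => ?_
  have hi' : i ≤ r := Nat.lt_succ_iff.1 (mem_range.1 hi)
  rw [Nat.choose_mul_succ_eq]
  gcongr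

theorem binomLe_mul_pow_le (m r : ℕ) {x : ℝ} (h0 : 0 ≤ x) (h1 : x ≤ 1) :
    binomLe m r * x ^ r ≤ (1 + x) ^ m := by
  have hle : (binomLe m r : ℝ) * x ^ r ≤ ∑ i ∈ range (r + 1), x ^ i * m.choose i := by
    rw [binomLe, Nat.cast_sum, sum_mul]
    refine sum_le_sum fun i hi => ?_
    rw [mul_comm]
    gcongr ?_ * _
    exact pow_le_pow_of_le_one h0 h1 (Nat.lt_succ_iff.1 (mem_range.1 hi))
  refine hle.trans ?_
  rw [add_comm 1 x, add_pow]
  simp only [one_pow, mul_one]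
  rcases le_total r m with h | h
  · exact sum_le_sum_of_subset_of_nonneg (range_mono (Nat.succ_le_succ h)) fun _ _ _ => by positivity
  · refine le_of_eq (sum_subset (range_mono (Nat.succ_le_succ h)) fun i _ hi => ?_).symm
    rw [Nat.choose_eq_zero_of_lt (by simpa using hi)]
    simp

theorem le_binomLe_one {m r : ℕ} (h : 1 ≤ r) : m + 1 ≤ binomLe m r := by
  refine le_trans ?_ (binomLe_mono_right m h)
  simp [binomLe, sum_range_succ, add_comm]

theorem sq_le_two_mul_binomLe {m r : ℕ} (h : 2 ≤ r) : m ^ 2 ≤ 2 * binomLe m r := by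
  refine le_trans ?_ (Nat.mul_le_mul_left 2 (binomLe_mono_right m h))
  have := Nat.triangle_succ m
  simp only [binomLe, sum_range_succ, range_zero, sum_empty, Nat.choose_zero_right,
    Nat.choose_one_right, Nat.choose_two_right]
  have h2 : m * (m - 1) / 2 * 2 = m * (m - 1) :=
    Nat.div_mul_cancel (Nat.even_mul_pred_self m).two_dvd
  cases m with
  | zero => simp
  | succ n =>
    simp only [Nat.add_sub_cancel] at *
    nlinarith

theorem card_monIdx (m r : ℕ) : Fintype.card (MonIdx m r) = binomLe m r := by
  rw [Fintype.card_subtype, binomLe]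
  have : (univ.filter fun S : Finset (Fin m) => S.card ≤ r) =
      (range (r + 1)).biUnion fun i => powersetCard i univ := by
    ext S
    simp
  rw [this, card_biUnion]
  · simp
  · intro i _ j _ hij
    exact pairwise_disjoint_powersetCard _ hij

end Binomial

section Code

/-- The function on `F₂^m` defined by a coefficient vector. -/
def evalFun (m r : ℕ) (c : RMcode m r) : (Fin m → ZMod 2) → ZMod 2 := fun z => evalLin m r z c

theorem evalFun_apply (m r : ℕ) (c : RMcode m r) (z : Fin m → ZMod 2) :
    evalFun m r c z = ∑ S : MonIdx m r, (∏ i ∈ S.1, z i) * c S := by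
  simp [evalFun, evalLin, LinearMap.sum_apply]

theorem prod_mem_degLE {m : ℕ} (S : Finset (Fin m)) :
    (fun z : Fin m → ZMod 2 => ∏ i ∈ S, z i) ∈ degLE (Fin m → ZMod 2) S.card := by
  induction S using Finset.induction_on with
  | empty =>
    rw [card_empty, mem_degLE_zero]
    intro y
    ext x
    simp only [fdiff_apply, prod_empty]
    rfl
  | insert a S ha ih =>
    rw [card_insert_of_notMem ha]
    simp_rw [prod_insert ha]
    exact mul_mem_degLE (Pi.evalAddMonoidHom (fun _ : Fin m => ZMod 2) a) ih

theorem evalFun_mem_degLE (m r : ℕ) (c : RMcode m r) :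
    evalFun m r c ∈ degLE (Fin m → ZMod 2) r := by
  have : evalFun m r c = ∑ S : MonIdx m r, c S • fun z : Fin m → ZMod 2 => ∏ i ∈ S.1, z i := by
    ext z
    rw [evalFun_apply, Finset.sum_apply]
    exact sum_congr rfl fun S _ => by simp [mul_comm]
  rw [this]
  exact sum_mem fun S _ => Submodule.smul_mem _ _ (degLE_mono S.2 (prod_mem_degLE S.1))

theorem evalFun_injective (m r : ℕ) : Function.Injective (evalFun m r) := by
  intro c c' h
  by_contra hne
  have hd : ∀ z, evalFun m r (c - c') z = 0 := by
    intro z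
    have := congrFun h z
    simp only [evalFun] at this ⊢
    rw [map_sub, this, sub_self]
  obtain ⟨T, hT, hmin⟩ := exists_min_image (univ.filter fun S : MonIdx m r => (c - c') S ≠ 0)
    (fun S => S.1.card) (by
      obtain ⟨S, hS⟩ := Function.ne_iff.1 hne
      exact ⟨S, by simpa [sub_eq_zero] using hS⟩)
  have hT' := (mem_filter.1 hT).2
  apply hT'
  have := hd fun i => if i ∈ T.1 then 1 else 0
  rw [evalFun_apply, sum_eq_single T] at this
  · rwa [prod_congr rfl (fun i hi => if_pos hi), prod_const_one, one_mul] at this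
  · intro S _ hST
    by_cases hs : S.1 ⊆ T.1
    · have hlt : S.1.card < T.1.card := card_lt_card
        (hs.ssubset_of_ne fun e => hST (Subtype.ext e))
      have hz : (c - c') S = 0 := by
        by_contra hz
        exact absurd (hmin S (by simpa using hz)) (by lia)
      rw [hz, mul_zero]
    · obtain ⟨i, hi, hiT⟩ := not_subset.1 hs
      rw [prod_eq_zero hi (if_neg hiT), zero_mul]
  · simp

theorem card_RMcode (m r : ℕ) : Fintype.card (RMcode m r) = 2 ^ binomLe m r := by
  rw [Fintype.card_fun, ZMod.card, card_monIdx]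

theorem two_pow_le_card_degLE (m r : ℕ) :
    2 ^ binomLe m r ≤ Nat.card (degLE (Fin m → ZMod 2) r) := by
  rw [← card_RMcode, ← Nat.card_eq_fintype_card]
  refine Nat.card_le_card_of_injective
    (fun c : RMcode m r => (⟨evalFun m r c, evalFun_mem_degLE m r c⟩ : degLE _ r)) ?_
  intro c c' h
  exact evalFun_injective m r (congrArg Subtype.val h)

theorem card_degLE_le (m r : ℕ) :
    Nat.card (degLE (Fin m → ZMod 2) r) ≤ 2 ^ binomLe m r := by
  have of_const {G : Type} [AddCommGroup G] (C : Submodule (ZMod 2) (G → ZMod 2))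
      (h : ∀ P ∈ C, ∀ x, P x = P 0) : Nat.card C ≤ 2 := by
    calc Nat.card C ≤ Nat.card (ZMod 2) := by
          refine Nat.card_le_card_of_injective (fun P => P.1 0) ?_
          intro P Q hPQ
          ext x
          rw [h P.1 P.2, h Q.1 Q.2]
          exact hPQ
      _ = 2 := by simp
  induction m generalizing r with
  | zero =>
    rw [binomLe_zero_left]
    exact of_const _ fun P _ x => congrArg P (Subsingleton.elim _ _)
  | succ m ih =>
    cases r with
    | zero =>
      rw [binomLe_zero_right]
      exact of_const _ fun P hP => eq_const_of_mem_degLE_zero hP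
    | succ r =>
      let L : (Fin m → ZMod 2) →+ (Fin (m + 1) → ZMod 2) :=
        { toFun := Fin.cons (α := fun _ => ZMod 2) 0
          map_zero' := by
            ext i
            refine Fin.cases ?_ (fun _ => ?_) i <;> simp
          map_add' := fun x y => by
            ext i
            refine Fin.cases ?_ (fun _ => ?_) i <;> simp }
      let e : Fin (m + 1) → ZMod 2 := Pi.single 0 1
      have hr {s : ℕ} {P} (hP : P ∈ degLE (Fin (m + 1) → ZMod 2) s) :
          (fun x => P (L x)) ∈ degLE (Fin m → ZMod 2) s := by
        simpa using comp_mem_degLE L hP 0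
      rw [binomLe_succ_succ, pow_add]
      refine le_trans ?_ (Nat.mul_le_mul (ih (r + 1)) (ih r))
      rw [← Nat.card_prod]
      refine Nat.card_le_card_of_injective (fun P : degLE (Fin (m + 1) → ZMod 2) (r + 1) =>
        ((⟨fun x => P.1 (L x), hr P.2⟩, ⟨fun x => fdiff e P.1 (L x),
          hr (mem_degLE_succ.1 P.2 e)⟩) : degLE (Fin m → ZMod 2) (r + 1) ×
            degLE (Fin m → ZMod 2) r)) ?_
      intro P Q hPQ
      simp only [Prod.mk.injEq, Subtype.mk.injEq] at hPQ
      have h0 (x) : P.1 (L x) = Q.1 (L x) := congrFun hPQ.1 x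
      have h1 (x) : P.1 (L x + e) = Q.1 (L x + e) := by
        have := congrFun hPQ.2 x
        simp only [fdiff_apply] at this
        rw [h0] at this
        exact add_right_cancel this
      ext z
      have hz : z = L (Fin.tail z) ∨ z = L (Fin.tail z) + e := by
        have h01 : ∀ a : ZMod 2, a = 0 ∨ a = 1 := by decide
        rcases h01 (z 0) with h | h
        · left
          ext i
          refine Fin.cases ?_ (fun _ => ?_) i <;> simp [L, h, Fin.tail]
        · right
          ext i
          refine Fin.cases ?_ (fun _ => ?_) i <;> simp [L, h, Fin.tail, e]
      rcases hz with hz | hz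
      · rw [hz, h0]
      · rw [hz, h1]

theorem exists_linearMap_surjective_of_finrank {V : Type*} [AddCommGroup V] [Module (ZMod 2) V]
    [Module.Finite (ZMod 2) V] {k : ℕ} (h : k ≤ Module.finrank (ZMod 2) V) :
    ∃ L : V →ₗ[ZMod 2] (Fin k → ZMod 2), Function.Surjective L := by
  refine ⟨LinearMap.funLeft (ZMod 2) (ZMod 2) (Fin.castLE h) ∘ₗ
    (Module.finBasis (ZMod 2) V).equivFun.toLinearMap, ?_⟩
  rw [LinearMap.coe_comp]
  exact (LinearMap.funLeft_surjective_of_injective _ _ _ (Fin.castLE_injective h)).comp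
    (LinearEquiv.surjective _)

theorem exists_surjective_vanishing {m t : ℕ} (ys : Fin t → Fin m → ZMod 2) :
    ∃ L : (Fin m → ZMod 2) →ₗ[ZMod 2] (Fin (m - t) → ZMod 2),
      Function.Surjective L ∧ ∀ i, L (ys i) = 0 := by
  let V := Submodule.span (ZMod 2) (Set.range ys)
  have hV : Module.finrank (ZMod 2) V ≤ t :=
    (finrank_range_le_card (R := ZMod 2) ys).trans_eq (Fintype.card_fin t)
  have hq := Submodule.finrank_quotient_add_finrank V
  rw [Module.finrank_fin_fun] at hq
  obtain ⟨L, hL⟩ := exists_linearMap_surjective_of_finrank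
    (V := (Fin m → ZMod 2) ⧸ V) (k := m - t) (by lia)
  refine ⟨L ∘ₗ V.mkQ, ?_, fun i => ?_⟩
  · rw [LinearMap.coe_comp]
    exact hL.comp (Submodule.mkQ_surjective V)
  · have : V.mkQ (ys i) = 0 := by
      rw [Submodule.mkQ_apply, Submodule.Quotient.mk_eq_zero]
      exact Submodule.subset_span ⟨i, rfl⟩
    rw [LinearMap.comp_apply, this, map_zero]

open Classical in
theorem card_image_fdiff_mul_le {m r t : ℕ} (ys : Fin t → Fin m → ZMod 2)
    (S : Finset ((Fin m → ZMod 2) → ZMod 2)) (hS : ∀ P ∈ S, P ∈ degLE (Fin m → ZMod 2) r) :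
    #(S.image fun P i => fdiff (ys i) P) * 2 ^ binomLe (m - t) r ≤ 2 ^ binomLe m r := by
  let U := degLE (Fin m → ZMod 2) r
  let Φ : U →ₗ[ZMod 2] (Fin t → (Fin m → ZMod 2) → ZMod 2) :=
    (LinearMap.pi fun i => fdiff (ys i)) ∘ₗ U.subtype
  have hcard : Nat.card U = Nat.card (LinearMap.range Φ) * Nat.card (LinearMap.ker Φ) := by
    rw [Submodule.card_eq_card_quotient_mul_card (LinearMap.ker Φ), mul_comm,
      Nat.card_congr Φ.quotKerEquivRange.toEquiv]
  have hrange : #(S.image fun P i => fdiff (ys i) P) ≤ Nat.card (LinearMap.range Φ) := by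
    rw [← SetLike.coe_sort_coe, Nat.card_coe_set_eq, ← Set.ncard_coe_finset]
    refine Set.ncard_le_ncard ?_ (Set.toFinite _)
    intro D hD
    obtain ⟨P, hP, rfl⟩ := mem_image.1 (mem_coe.1 hD)
    exact ⟨⟨P, hS P hP⟩, rfl⟩
  have hker : 2 ^ binomLe (m - t) r ≤ Nat.card (LinearMap.ker Φ) := by
    obtain ⟨L, hL, hL0⟩ := exists_surjective_vanishing ys
    refine (two_pow_le_card_degLE (m - t) r).trans ?_
    have hm (Q : degLE (Fin (m - t) → ZMod 2) r) : (fun x => Q.1 (L x)) ∈ U := by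
      simpa using comp_mem_degLE L.toAddMonoidHom Q.2 0
    have hk (Q : degLE (Fin (m - t) → ZMod 2) r) :
        (⟨fun x => Q.1 (L x), hm Q⟩ : U) ∈ LinearMap.ker Φ := by
      rw [LinearMap.mem_ker]
      ext i x
      simp only [Φ, LinearMap.comp_apply, LinearMap.pi_apply, Submodule.subtype_apply,
        fdiff_apply, map_add, hL0, add_zero, Pi.zero_apply]
      exact (ZMod.two_add_eq_zero_iff _ _).2 rfl
    refine Nat.card_le_card_of_injective (fun Q => (⟨_, hk Q⟩ : LinearMap.ker Φ)) ?_
    intro Q Q' h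
    ext z
    obtain ⟨x, rfl⟩ := hL z
    exact congrFun (congrArg (fun P => P.1.1) h) x
  calc _ ≤ Nat.card (LinearMap.range Φ) * Nat.card (LinearMap.ker Φ) :=
        Nat.mul_le_mul hrange hker
    _ = Nat.card U := hcard.symm
    _ ≤ _ := card_degLE_le m r

end Code

section Counting

theorem card_cube (m : ℕ) : Fintype.card (Fin m → ZMod 2) = 2 ^ m := by simp

open Classical in
/-- The number of polynomials of degree at most `r` in `m` variables of weight at most `2⁻ʲ`. -/
noncomputable def lowWeightCard (m r j : ℕ) : ℕ :=
  #{P : (Fin m → ZMod 2) → ZMod 2 | P ∈ degLE (Fin m → ZMod 2) r ∧ suppCard P * 2 ^ j ≤ 2 ^ m}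

open Classical in
/-- The number of polynomials of degree at most `r` in `m` variables of bias more than
`2⁻⁽ˡ⁺¹⁾`. -/
noncomputable def biasedCard (m r l : ℕ) : ℕ :=
  #{P : (Fin m → ZMod 2) → ZMod 2 | P ∈ degLE (Fin m → ZMod 2) r ∧ (1 / 2) ^ (l + 1) < bias P}

theorem lowWeightCard_le_one {m r j : ℕ} (h : r < j) : lowWeightCard m r j ≤ 1 := by
  have key {P} (hP : P ∈ degLE (Fin m → ZMod 2) r) (hs : suppCard P * 2 ^ j ≤ 2 ^ m) : P = 0 := by
    apply eq_zero_of_suppCard_lt hP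
    rw [card_cube]
    rcases Nat.eq_zero_or_pos (suppCard P) with h0 | h0
    · rw [h0, zero_mul]; positivity
    · exact lt_of_lt_of_le (by gcongr; norm_num) hs
  refine card_le_one.2 fun P hP Q hQ => ?_
  simp only [mem_filter, mem_univ, true_and] at hP hQ
  rw [key hP.1 hP.2, key hQ.1 hQ.2]

theorem lowWeightCard_le (m r j : ℕ) : lowWeightCard m r j ≤ 2 ^ binomLe m r := by
  classical
  refine le_trans ?_ (card_degLE_le m r)
  rw [lowWeightCard, ← Set.ncard_coe_finset, ← SetLike.coe_sort_coe, Nat.card_coe_set_eq]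
  refine Set.ncard_le_ncard ?_ (Set.toFinite _)
  intro P hP
  simp only [coe_filter, mem_univ, true_and, Set.mem_ofPred_eq] at hP
  exact hP.1

theorem lowWeightCard_succ_succ_le {m r j : ℕ} (hj : 1 ≤ j) :
    lowWeightCard m (r + 1) (j + 1) ≤
      lowWeightCard m (r + 1) (j + 2) * lowWeightCard m r j ^ 6 * (2 ^ m) ^ 6 := by
  classical
  conv_lhs => rw [lowWeightCard]
  rw [← card_cube m]
  have hdiv : 2 ^ m / 2 ^ (j + 3) * 2 ^ (j + 3) ≤ 2 ^ m := Nat.div_mul_le_self _ _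
  refine card_le_of_exists_badCard_le (r := r + 1) (e := 2 ^ m / 2 ^ (j + 3)) _ ?_ ?_ ?_ ?_
  · exact fun P hP => (mem_filter.1 hP).2.1
  · intro P hP
    have hs := (mem_filter.1 hP).2.2
    rw [card_cube] at hs
    have hsR : (suppCard P : ℝ) * 2 ^ (j + 1) ≤ 2 ^ m := by exact_mod_cast hs
    have hpow : (4 : ℝ) ≤ 2 ^ (j + 1) := by
      calc (4 : ℝ) = 2 ^ 2 := by norm_num
        _ ≤ _ := by gcongr <;> [norm_num; lia]
    have hN : (0 : ℝ) < 2 ^ m := by positivity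
    have hse := suppCard_eq P
    rw [card_cube] at hse
    push_cast at hse
    have hs0 : (0 : ℝ) ≤ suppCard P := Nat.cast_nonneg _
    have hb : 1 / 2 ≤ bias P := by
      by_contra hb
      push Not at hb
      nlinarith
    obtain ⟨ys, hys⟩ := exists_badCard_le P (by linarith) 6
    refine ⟨ys, ?_⟩
    rw [card_cube] at hys
    push_cast at hys
    set B : ℝ := (badCard (List.ofFn ys) P : ℝ) with hB
    have hB0 : 0 ≤ B := Nat.cast_nonneg _
    have hb2 : 1 / 4 ≤ bias P ^ 2 := by nlinarith
    have h1 : B * 4 ≤ suppCard P := by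
      have h3 : (1 - bias P ^ 2) * 2 ^ m ≤ 4 * suppCard P := by
        have := bias_le_one P
        rw [hse]
        nlinarith [mul_nonneg (sub_nonneg.2 this) hN.le]
      nlinarith
    rw [Nat.le_div_iff_mul_le (by positivity)]
    have : B * 2 ^ (j + 3) ≤ 2 ^ m := by
      calc B * 2 ^ (j + 3) = B * 4 * 2 ^ (j + 1) := by ring
        _ ≤ suppCard P * 2 ^ (j + 1) := by gcongr
        _ ≤ _ := hsR
    rw [hB] at this
    exact_mod_cast this
  · intro ys
    have hc : lowWeightCard m r j ^ 6 = #(Fintype.piFinset fun _ : Fin 6 =>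
        {P : (Fin m → ZMod 2) → ZMod 2 |
          P ∈ degLE (Fin m → ZMod 2) r ∧ suppCard P * 2 ^ j ≤ 2 ^ m}) := by
      rw [Fintype.card_piFinset, prod_const, card_univ, Fintype.card_fin, lowWeightCard]
    rw [hc]
    refine card_le_card fun D hD => ?_
    obtain ⟨P, hP, rfl⟩ := mem_image.1 hD
    simp only [mem_filter, mem_univ, true_and, Fintype.mem_piFinset] at hP ⊢
    intro i
    refine ⟨mem_degLE_succ.1 hP.1 _, ?_⟩
    calc _ ≤ 2 * suppCard P * 2 ^ j := by gcongr; exact suppCard_fdiff_le _ _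
      _ = suppCard P * 2 ^ (j + 1) := by ring
      _ ≤ _ := hP.2.trans_eq (card_cube m)
  · refine card_le_card fun P hP => ?_
    simp only [mem_filter, mem_univ, true_and] at hP ⊢
    refine ⟨hP.1, ?_⟩
    calc _ ≤ 2 * (2 ^ m / 2 ^ (j + 3)) * 2 ^ (j + 2) := by gcongr; exact hP.2
      _ = 2 ^ m / 2 ^ (j + 3) * 2 ^ (j + 3) := by ring
      _ ≤ _ := hdiv

theorem pow_mul_le_binomLe_succ {m r : ℕ} (h : 2000 * (r + 1) ≤ m) :
    500 ^ r * m ≤ binomLe m (r + 1) := by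
  induction r with
  | zero => simpa using (Nat.le_succ m).trans (le_binomLe_one le_rfl)
  | succ r ih =>
    calc 500 ^ (r + 1) * m = 500 * (500 ^ r * m) := by ring
      _ ≤ 500 * binomLe m (r + 1) := by gcongr; exact ih (by lia)
      _ ≤ _ := mul_binomLe_le_succ (by lia)

theorem lowWeightCard_le_rpow {m r : ℕ} (i : ℕ) (hr : 1 ≤ r) (hm : 2000 * r ≤ m) :
    (lowWeightCard m r (i + 1) : ℝ) ≤ 2 ^ ((binomLe m r : ℝ) * (1 / 16) ^ i) := by
  have of_lt {s i : ℕ} (h : s < i + 1) :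
      (lowWeightCard m s (i + 1) : ℝ) ≤ 2 ^ ((binomLe m s : ℝ) * (1 / 16) ^ i) := by
    calc (lowWeightCard m s (i + 1) : ℝ) ≤ 1 := by exact_mod_cast lowWeightCard_le_one h
      _ ≤ _ := Real.one_le_rpow (by norm_num) (by positivity)
  have of_zero (s : ℕ) :
      (lowWeightCard m s (0 + 1) : ℝ) ≤ 2 ^ ((binomLe m s : ℝ) * (1 / 16) ^ 0) := by
    rw [pow_zero, mul_one, Real.rpow_natCast]
    exact_mod_cast lowWeightCard_le m s 1
  induction r, hr using Nat.le_induction generalizing i with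
  | base =>
    rcases i with _ | i
    · exact of_zero 1
    · exact of_lt (by lia)
  | succ r hr ih =>
    obtain ⟨k, hk⟩ : ∃ k, r + 1 ≤ i + k := ⟨r + 1, by lia⟩
    induction k generalizing i with
    | zero => exact of_lt (by lia)
    | succ k ihk =>
      rcases i with _ | i
      · exact of_zero _
      by_cases hi : r + 1 < i + 2
      · exact of_lt hi
      set D : ℝ := (binomLe m (r + 1) : ℝ) with hD
      have hrec : (lowWeightCard m (r + 1) (i + 1 + 1) : ℝ) ≤
          lowWeightCard m (r + 1) (i + 2 + 1) * lowWeightCard m r (i + 1) ^ 6 * (2 ^ m) ^ 6 := by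
        exact_mod_cast lowWeightCard_succ_succ_le (m := m) (r := r) (j := i + 1) (by lia)
      have h1 := ihk (i + 2) (by lia)
      have h2 := ih i (by lia)
      have hD' : 500 * (binomLe m r : ℝ) ≤ D := by
        rw [hD]
        exact_mod_cast mul_binomLe_le_succ (m := m) (r := r) (c := 500) (by lia)
      have hlow : 500 * (m : ℝ) ≤ D * (1 / 16) ^ i := by
        have h3 : (500 : ℝ) ^ r * m ≤ D := by
          rw [hD]
          exact_mod_cast pow_mul_le_binomLe_succ hm
        have h4 : (500 : ℝ) * 16 ^ i ≤ 500 ^ r := by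
          calc (500 : ℝ) * 16 ^ i ≤ 500 * 500 ^ i := by gcongr; norm_num
            _ = 500 ^ (i + 1) := by ring
            _ ≤ _ := by gcongr <;> [norm_num; lia]
        have h5 : (500 : ℝ) * 16 ^ i * m ≤ D := le_trans (by gcongr) h3
        rw [one_div, inv_pow, ← div_eq_mul_inv, le_div_iff₀ (by positivity)]
        linarith
      calc _ ≤ _ := hrec
        _ ≤ 2 ^ (D * (1 / 16) ^ (i + 2)) * (2 ^ ((binomLe m r : ℝ) * (1 / 16) ^ i)) ^ 6 *
            (2 ^ m) ^ 6 := by gcongr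
        _ = 2 ^ (D * (1 / 16) ^ (i + 2) + (binomLe m r : ℝ) * (1 / 16) ^ i * 6 + m * 6) := by
          rw [Real.rpow_add (by norm_num), Real.rpow_add (by norm_num),
            Real.rpow_mul (by norm_num) _ 6, Real.rpow_mul (by norm_num) _ 6, Real.rpow_natCast 2 m]
          norm_cast
        _ ≤ _ := by
          apply Real.rpow_le_rpow_of_exponent_le (by norm_num)
          have hp : (0 : ℝ) < (1 / 16) ^ i := by positivity
          rw [pow_add, pow_add]
          nlinarith [mul_le_mul_of_nonneg_right hD' hp.le]

theorem biasedCard_mul_le (m r l : ℕ) :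
    biasedCard m r l * 2 ^ binomLe (m - (3 * l + 4)) r ≤
      lowWeightCard m r (l + 1) * 2 ^ binomLe m r * (2 ^ m) ^ (3 * l + 4) := by
  classical
  have hdiv : 2 ^ m / 2 ^ (l + 2) * 2 ^ (l + 2) ≤ 2 ^ m := Nat.div_mul_le_self _ _
  have key : biasedCard m r l ≤ lowWeightCard m r (l + 1) *
      (2 ^ binomLe m r / 2 ^ binomLe (m - (3 * l + 4)) r) *
        Fintype.card (Fin m → ZMod 2) ^ (3 * l + 4) := by
    refine card_le_of_exists_badCard_le (r := r) (e := 2 ^ m / 2 ^ (l + 2)) _ ?_ ?_ ?_ ?_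
    · exact fun P hP => (mem_filter.1 hP).2.1
    · intro P hP
      have hb := (mem_filter.1 hP).2.2
      have hb0 : (0 : ℝ) < (1 / 2) ^ (l + 1) := by positivity
      obtain ⟨ys, hys⟩ := exists_badCard_le P (hb0.trans hb) (3 * l + 4)
      refine ⟨ys, ?_⟩
      rw [card_cube] at hys
      push_cast at hys
      rw [Nat.le_div_iff_mul_le (by positivity)]
      have h2 : ((1 / 2 : ℝ) ^ (l + 1)) ^ 2 ≤ bias P ^ 2 := by gcongr
      have h3 : (badCard (List.ofFn ys) P : ℝ) * ((1 / 2 : ℝ) ^ (l + 1)) ^ 2 ≤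
          2 ^ m / 2 ^ (3 * l + 4) := by
        calc _ ≤ (badCard (List.ofFn ys) P : ℝ) * bias P ^ 2 := by gcongr
          _ ≤ _ := hys
          _ ≤ _ := by
            gcongr
            exact mul_le_of_le_one_left (by positivity) (by nlinarith [sq_nonneg (bias P)])
      have h4 : (badCard (List.ofFn ys) P : ℝ) * 2 ^ (l + 2) ≤ 2 ^ m := by
        rw [le_div_iff₀ (by positivity)] at h3
        refine le_trans (le_of_eq ?_) h3
        rw [one_div, inv_pow]
        field_simp
        ring
      exact_mod_cast h4
    · intro ys
      rw [Nat.le_div_iff_mul_le (by positivity)]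
      exact card_image_fdiff_mul_le ys _ fun P hP => (mem_filter.1 hP).2.1
    · refine card_le_card fun P hP => ?_
      simp only [mem_filter, mem_univ, true_and] at hP ⊢
      refine ⟨hP.1, ?_⟩
      calc _ ≤ 2 * (2 ^ m / 2 ^ (l + 2)) * 2 ^ (l + 1) := by gcongr; exact hP.2
        _ = 2 ^ m / 2 ^ (l + 2) * 2 ^ (l + 2) := by ring
        _ ≤ _ := hdiv
  rw [card_cube] at key
  calc _ ≤ lowWeightCard m r (l + 1) *
      (2 ^ binomLe m r / 2 ^ binomLe (m - (3 * l + 4)) r) * (2 ^ m) ^ (3 * l + 4) *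
        2 ^ binomLe (m - (3 * l + 4)) r := by gcongr
    _ = lowWeightCard m r (l + 1) * (2 ^ binomLe m r / 2 ^ binomLe (m - (3 * l + 4)) r *
        2 ^ binomLe (m - (3 * l + 4)) r) * (2 ^ m) ^ (3 * l + 4) := by ring
    _ ≤ _ := by gcongr; exact Nat.div_mul_le_self _ _

theorem pow_mul_binomLe_le_sub {m r t : ℕ} (ht : t ≤ m) (h : 500 * r ≤ m - t) :
    (499 / 500 : ℝ) ^ t * binomLe m r ≤ binomLe (m - t) r := by
  induction t with
  | zero => simp
  | succ t ih =>
    obtain ⟨n, hn⟩ : ∃ n, m - t = n + 1 := ⟨m - t - 1, by lia⟩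
    have hn' : m - (t + 1) = n := by lia
    rw [hn'] at h ⊢
    have ih' := ih (by lia) (by lia)
    rw [hn] at ih'
    have hs : (binomLe (n + 1) r : ℝ) * (n + 1 - r) ≤ binomLe n r * (n + 1) := by
      have := mul_binomLe_succ_le n r
      have hc : ((n + 1 - r : ℕ) : ℝ) = n + 1 - r := by
        rw [Nat.cast_sub (by lia)]; push_cast; ring
      rw [← hc]
      exact_mod_cast this
    have hr : 500 * (r : ℝ) ≤ n := by exact_mod_cast h
    have hn0 : (0 : ℝ) < n + 1 := by positivity
    have h1 : 499 / 500 * (binomLe (n + 1) r : ℝ) ≤ binomLe n r := by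
      refine le_of_mul_le_mul_right (le_trans ?_ hs) hn0
      have : (0 : ℝ) ≤ binomLe (n + 1) r := Nat.cast_nonneg _
      nlinarith
    rw [pow_succ]
    nlinarith

end Counting

section Expectation

theorem mem_vanishing {m r : ℕ} {Z : Set (Fin m → ZMod 2)} {c : RMcode m r} :
    c ∈ vanishing m r Z ↔ ∀ z ∈ Z, evalLin m r z c = 0 := by
  simp [vanishing]

theorem two_pow_le_card_vanishing_mul (m r : ℕ) (Z : Finset (Fin m → ZMod 2)) :
    2 ^ binomLe m r ≤ Nat.card (vanishing m r (Z : Set (Fin m → ZMod 2))) * 2 ^ #Z := by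
  let f : RMcode m r →ₗ[ZMod 2] (Z → ZMod 2) := LinearMap.pi fun z => evalLin m r z
  have hf : LinearMap.ker f = vanishing m r (Z : Set (Fin m → ZMod 2)) := by
    ext c
    rw [mem_vanishing, LinearMap.mem_ker, funext_iff]
    simp [f]
  have hrange : Nat.card (RMcode m r ⧸ LinearMap.ker f) ≤ 2 ^ #Z := by
    rw [Nat.card_congr f.quotKerEquivRange.toEquiv]
    refine (Nat.card_le_card_of_injective _ Subtype.val_injective).trans_eq ?_
    rw [Nat.card_eq_fintype_card, Fintype.card_fun, ZMod.card, Fintype.card_coe]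
  calc 2 ^ binomLe m r = Nat.card (RMcode m r) := by
        rw [Nat.card_eq_fintype_card, card_RMcode]
    _ = Nat.card (LinearMap.ker f) * Nat.card (RMcode m r ⧸ LinearMap.ker f) :=
        Submodule.card_eq_card_quotient_mul_card _
    _ ≤ _ := by
        rw [hf] at hrange ⊢
        gcongr

theorem sum_card_vanishing (m r K : ℕ) :
    ∑ Z ∈ (univ : Finset (Fin m → ZMod 2)).powersetCard K,
      Nat.card (vanishing m r (Z : Set (Fin m → ZMod 2))) =
    ∑ c : RMcode m r, (numZeros m r c).choose K := by
  classical
  have h1 (Z : Finset (Fin m → ZMod 2)) :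
      Nat.card (vanishing m r (Z : Set (Fin m → ZMod 2))) =
        ∑ c : RMcode m r, if ∀ z ∈ Z, evalLin m r z c = 0 then 1 else 0 := by
    rw [← card_filter, ← Fintype.card_subtype, ← Nat.card_eq_fintype_card]
    exact Nat.card_congr (Equiv.subtypeEquivRight fun c => mem_vanishing)
  simp_rw [h1]
  rw [sum_comm]
  refine sum_congr rfl fun c _ => ?_
  rw [← card_filter, numZeros, ← card_powersetCard]
  congr 1
  ext Z
  simp only [mem_filter, mem_powersetCard, subset_iff, mem_univ, true_and]
  grind

theorem choose_mul_pow_le {a N : ℕ} (h : a ≤ N) (K : ℕ) :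
    a.choose K * N ^ K ≤ N.choose K * a ^ K := by
  have key : a.descFactorial K * N ^ K ≤ N.descFactorial K * a ^ K := by
    induction K with
    | zero => simp
    | succ K ih =>
      have h1 : (a - K) * N ≤ (N - K) * a := by
        rw [Nat.sub_mul, Nat.sub_mul, mul_comm a N]
        exact Nat.sub_le_sub_left (Nat.mul_le_mul_left K h) _
      calc _ = ((a - K) * N) * (a.descFactorial K * N ^ K) := by
            rw [Nat.descFactorial_succ]; ring
        _ ≤ ((N - K) * a) * (N.descFactorial K * a ^ K) := by gcongr
        _ = _ := by rw [Nat.descFactorial_succ]; ring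
  rw [Nat.descFactorial_eq_factorial_mul_choose, Nat.descFactorial_eq_factorial_mul_choose,
    mul_assoc, mul_assoc] at key
  exact Nat.le_of_mul_le_mul_left key (Nat.factorial_pos K)

theorem numZeros_eq (m r : ℕ) (c : RMcode m r) :
    (numZeros m r c : ℝ) = (1 + bias (evalFun m r c)) / 2 * 2 ^ m := by
  have h1 : numZeros m r c + suppCard (evalFun m r c) = 2 ^ m := by
    rw [← card_cube, ← card_univ]
    exact card_filter_add_card_filter_not _
  have h2 := suppCard_eq (evalFun m r c)
  rw [card_cube] at h2
  have h3 : (numZeros m r c : ℝ) + suppCard (evalFun m r c) = 2 ^ m := by exact_mod_cast h1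
  push_cast at h2
  linarith

theorem binomLe_le_two_pow (m r : ℕ) : binomLe m r ≤ 2 ^ m := by
  have := binomLe_mul_pow_le m r zero_le_one le_rfl
  rw [one_pow, mul_one, one_add_one_eq_two] at this
  exact_mod_cast this

theorem expectation_le_inv_mul_sum {m r K : ℕ} (hK : K ≤ binomLe m r) :
    (∑ Z ∈ (univ : Finset (Fin m → ZMod 2)).powersetCard K,
      (Nat.card (vanishing m r (Z : Set (Fin m → ZMod 2))) : ℝ) / 2 ^ binomLe m r) /
        (#((univ : Finset (Fin m → ZMod 2)).powersetCard K) : ℝ) ≤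
      ((2 : ℝ) ^ K)⁻¹ *
        ((∑ c : RMcode m r, (1 + bias (evalFun m r c)) ^ K) / 2 ^ binomLe m r) := by
  have hN : 0 < (2 ^ m).choose K := Nat.choose_pos (hK.trans (binomLe_le_two_pow m r))
  have hN' : (0 : ℝ) < (2 ^ m).choose K := by exact_mod_cast hN
  rw [← sum_div, ← Nat.cast_sum, sum_card_vanishing, card_powersetCard, card_univ, card_cube,
    div_div, mul_comm (2 ^ binomLe m r : ℝ), ← div_div, ← mul_div_assoc]
  gcongr
  rw [Nat.cast_sum, div_le_iff₀ hN', mul_sum, sum_mul]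
  refine sum_le_sum fun c _ => ?_
  have hle : numZeros m r c ≤ 2 ^ m := (card_le_univ _).trans_eq (card_cube m)
  have h1 : ((numZeros m r c).choose K : ℝ) * (2 ^ m) ^ K ≤
      (2 ^ m).choose K * (numZeros m r c : ℝ) ^ K := by exact_mod_cast choose_mul_pow_le hle K
  rw [numZeros_eq, mul_pow, ← mul_assoc] at h1
  have h2 := le_of_mul_le_mul_right h1 (by positivity)
  rw [div_pow] at h2
  calc _ ≤ _ := h2
    _ = _ := by ring

theorem inv_le_expectation {m r K : ℕ} (hK : K ≤ binomLe m r) :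
    ((2 : ℝ) ^ K)⁻¹ ≤ (∑ Z ∈ (univ : Finset (Fin m → ZMod 2)).powersetCard K,
      (Nat.card (vanishing m r (Z : Set (Fin m → ZMod 2))) : ℝ) / 2 ^ binomLe m r) /
        (#((univ : Finset (Fin m → ZMod 2)).powersetCard K) : ℝ) := by
  have hN : 0 < #((univ : Finset (Fin m → ZMod 2)).powersetCard K) := by
    rw [card_powersetCard, card_univ, card_cube]
    exact Nat.choose_pos (hK.trans (binomLe_le_two_pow m r))
  rw [le_div_iff₀ (by exact_mod_cast hN), mul_comm, ← nsmul_eq_mul]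
  refine card_nsmul_le_sum _ _ _ fun Z hZ => ?_
  rw [le_div_iff₀ (by positivity), inv_mul_le_iff₀ (by positivity), mul_comm,
    ← (mem_powersetCard.1 hZ).2]
  exact_mod_cast two_pow_le_card_vanishing_mul m r Z

end Expectation

section Moment

variable {m r K : ℕ}

theorem card_filter_evalFun_le {p : ((Fin m → ZMod 2) → ZMod 2) → Prop} [DecidablePred p]
    {S : Finset ((Fin m → ZMod 2) → ZMod 2)}
    (hS : ∀ P ∈ degLE (Fin m → ZMod 2) r, p P → P ∈ S) :
    #{c : RMcode m r | p (evalFun m r c)} ≤ #S :=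
  card_le_card_of_injOn (evalFun m r)
    (fun c hc => hS _ (evalFun_mem_degLE m r c) (by simpa using hc))
    (evalFun_injective m r).injOn

theorem card_evalFun_eq_zero_le (m r : ℕ) :
    #{c : RMcode m r | evalFun m r c = 0} ≤ 1 :=
  card_le_one.2 fun _ hc _ hc' =>
    evalFun_injective m r ((mem_filter.1 hc).2.trans (mem_filter.1 hc').2.symm)

theorem sum_one_add_bias_pow_one_le (m K : ℕ) :
    ∑ c : RMcode m 1, (1 + bias (evalFun m 1 c)) ^ K ≤ 2 ^ binomLe m 1 + 2 ^ K := by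
  have h (c : RMcode m 1) : (1 + bias (evalFun m 1 c)) ^ K ≤
      1 + if evalFun m 1 c = 0 then 2 ^ K else 0 := by
    have h0 := bias_ge_neg_one (evalFun m 1 c)
    have h1 := bias_le_one (evalFun m 1 c)
    by_cases hb : 0 < bias (evalFun m 1 c)
    · rw [if_pos (eq_zero_of_bias_pos_of_mem_degLE_one (evalFun_mem_degLE m 1 c) hb)]
      have : (1 + bias (evalFun m 1 c)) ^ K ≤ 2 ^ K := by
        gcongr
        linarith
      linarith
    · have : (1 + bias (evalFun m 1 c)) ^ K ≤ 1 := pow_le_one₀ (by linarith) (by linarith)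
      split_ifs
      · have : (0 : ℝ) ≤ 2 ^ K := by positivity
        linarith
      · linarith
  calc _ ≤ ∑ c : RMcode m 1, (1 + if evalFun m 1 c = 0 then (2 : ℝ) ^ K else 0) :=
        sum_le_sum fun c _ => h c
    _ = 2 ^ binomLe m 1 + #{c : RMcode m 1 | evalFun m 1 c = 0} * 2 ^ K := by
        rw [sum_add_distrib, ← sum_filter, sum_const, sum_const, card_univ, card_RMcode]
        simp
    _ ≤ 2 ^ binomLe m 1 + 1 * 2 ^ K := by
        gcongr
        exact_mod_cast card_evalFun_eq_zero_le m 1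
    _ = _ := by rw [one_mul]

open Classical in
theorem one_add_bias_pow_le {P : (Fin m → ZMod 2) → ZMod 2} (hr : 1 ≤ r)
    (hP : P ∈ degLE (Fin m → ZMod 2) r) {L : ℕ} {A : ℝ}
    (hA : Real.exp ((1 / 2) ^ (L + 1) * K) ≤ A) :
    (1 + bias P) ^ K ≤ A +
      ∑ l ∈ range L, (if (1 / 2) ^ (l + 2) < bias P then Real.exp ((1 / 2) ^ (l + 1) * K) else 0) +
      ∑ i ∈ range r, (if suppCard P * 2 ^ (i + 2) ≤ 2 ^ m then
        (2 * (1 - (1 / 2 : ℝ) ^ (i + 3))) ^ K else 0) +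
      if P = 0 then 2 ^ K else 0 := by
  have hA0 : 0 ≤ A := (Real.exp_pos _).le.trans hA
  have hlow (i : ℕ) : (0 : ℝ) ≤ 2 * (1 - (1 / 2 : ℝ) ^ (i + 3)) := by
    have : (1 / 2 : ℝ) ^ (i + 3) ≤ 1 := pow_le_one₀ (by norm_num) (by norm_num)
    linarith
  have h1 : ∀ l ∈ range L, 0 ≤
      (if (1 / 2) ^ (l + 2) < bias P then Real.exp ((1 / 2) ^ (l + 1) * K) else 0) := by
    intro l _
    split_ifs <;> positivity
  have h2 : ∀ i ∈ range r, 0 ≤ (if suppCard P * 2 ^ (i + 2) ≤ 2 ^ m then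
      (2 * (1 - (1 / 2 : ℝ) ^ (i + 3))) ^ K else 0) := by
    intro i _
    split_ifs
    exacts [pow_nonneg (hlow i) _, le_rfl]
  have h3 : (0 : ℝ) ≤ if P = 0 then 2 ^ K else 0 := by split_ifs <;> positivity
  have hs1 := sum_nonneg h1
  have hs2 := sum_nonneg h2
  have hb0 := bias_ge_neg_one P
  have hexp {x : ℝ} (hx : bias P ≤ x) : (1 + bias P) ^ K ≤ Real.exp (x * K) := by
    calc (1 + bias P) ^ K ≤ Real.exp x ^ K := by
          have := Real.add_one_le_exp x
          gcongr <;> linarith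
      _ = _ := by rw [← Real.exp_nat_mul, mul_comm]
  by_cases hb : bias P ≤ (1 / 2) ^ (L + 1)
  · linarith [hexp hb]
  push Not at hb
  by_cases hhalf : bias P ≤ 1 / 2
  · have hex : ∃ l, (1 / 2) ^ (l + 2) < bias P := by
      refine ⟨L, lt_of_le_of_lt ?_ hb⟩
      exact pow_le_pow_of_le_one (by norm_num) (by norm_num) (by lia)
    have hL : Nat.find hex < L := by
      rcases L with _ | L
      · norm_num at hb
        linarith
      · exact Nat.lt_succ_of_le (Nat.find_min' hex hb)
    have hle : bias P ≤ (1 / 2) ^ (Nat.find hex + 1) := by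
      rcases hn : Nat.find hex with _ | n
      · simpa using hhalf
      · exact not_lt.1 (Nat.find_min hex (m := n) (by lia))
    have := single_le_sum h1 (mem_range.2 hL)
    rw [if_pos (Nat.find_spec hex)] at this
    linarith [hexp hle]
  push Not at hhalf
  by_cases h0 : P = 0
  · rw [if_pos h0]
    have h1' := bias_le_one P
    have : (1 + bias P) ^ K ≤ 2 ^ K := by gcongr; linarith
    linarith
  have hsupp : 2 ^ m ≤ suppCard P * 2 ^ r := by
    by_contra! h
    exact h0 (eq_zero_of_suppCard_lt hP (by rwa [card_cube]))
  have hpos : 0 < suppCard P := by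
    by_contra! h
    rw [Nat.le_zero.1 h, zero_mul] at hsupp
    exact absurd hsupp (by simp)
  have hlt : 2 ^ m < suppCard P * 2 ^ (r - 1 + 3) :=
    hsupp.trans_lt (by gcongr <;> [norm_num; lia])
  have hex : ∃ i, 2 ^ m < suppCard P * 2 ^ (i + 3) := ⟨r - 1, hlt⟩
  have hir : Nat.find hex < r := (Nat.find_min' hex hlt).trans_lt (by lia)
  have hse := suppCard_eq P
  rw [card_cube] at hse
  push_cast at hse
  have hN : (0 : ℝ) < 2 ^ m := by positivity
  have hle : suppCard P * 2 ^ (Nat.find hex + 2) ≤ 2 ^ m := by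
    rcases hn : Nat.find hex with _ | n
    · have : (suppCard P : ℝ) * 2 ^ (0 + 2) ≤ 2 ^ m := by
        norm_num
        nlinarith
      exact_mod_cast this
    · exact not_lt.1 (Nat.find_min hex (m := n) (by lia))
  have hspec : (2 : ℝ) ^ m < suppCard P * 2 ^ (Nat.find hex + 3) := by
    exact_mod_cast Nat.find_spec hex
  have := single_le_sum h2 (mem_range.2 hir)
  rw [if_pos hle] at this
  have hb2 : 1 + bias P ≤ 2 * (1 - (1 / 2) ^ (Nat.find hex + 3)) := by
    have h5 : (1 / 2 : ℝ) ^ (Nat.find hex + 3) ≤ (1 - bias P) / 2 := by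
      rw [hse] at hspec
      rw [one_div, inv_pow, inv_le_iff_one_le_mul₀ (by positivity)]
      by_contra! h
      nlinarith
    linarith
  have h6 : (1 + bias P) ^ K ≤ (2 * (1 - (1 / 2) ^ (Nat.find hex + 3))) ^ K := by
    gcongr
  linarith

theorem sum_one_add_bias_pow_le (hr : 1 ≤ r) {L : ℕ} {A : ℝ}
    (hA : Real.exp ((1 / 2) ^ (L + 1) * K) ≤ A) :
    ∑ c : RMcode m r, (1 + bias (evalFun m r c)) ^ K ≤ A * 2 ^ binomLe m r +
      ∑ l ∈ range L, biasedCard m r (l + 1) * Real.exp ((1 / 2) ^ (l + 1) * K) +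
      ∑ i ∈ range r, lowWeightCard m r (i + 2) * (2 * (1 - (1 / 2 : ℝ) ^ (i + 3))) ^ K + 2 ^ K := by
  classical
  have hlow (i : ℕ) : (0 : ℝ) ≤ 2 * (1 - (1 / 2 : ℝ) ^ (i + 3)) := by
    have : (1 / 2 : ℝ) ^ (i + 3) ≤ 1 := pow_le_one₀ (by norm_num) (by norm_num)
    linarith
  refine (sum_le_sum fun c _ => one_add_bias_pow_le hr (evalFun_mem_degLE m r c) hA).trans ?_
  rw [sum_add_distrib, sum_add_distrib, sum_add_distrib, sum_const, card_univ, card_RMcode,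
    sum_comm, sum_comm (s := univ) (t := range r)]
  simp only [← sum_filter, sum_const, nsmul_eq_mul]
  gcongr ?_ + ∑ l ∈ _, ?_ * _ + ∑ i ∈ _, ?_ * _ + ?_ with l hl i hi
  · push_cast
    rw [mul_comm]
  · exact Nat.cast_le.2 <| card_filter_evalFun_le (p := fun P => (1 / 2) ^ (l + 2) < bias P)
      fun P hP hb => mem_filter.2 ⟨mem_univ _, hP, hb⟩
  · exact pow_nonneg (hlow i) _
  · exact Nat.cast_le.2 <| card_filter_evalFun_le (p := fun P => suppCard P * 2 ^ (i + 2) ≤ 2 ^ m)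
      fun P hP hb => mem_filter.2 ⟨mem_univ _, hP, hb⟩
  · refine mul_le_of_le_one_left (by positivity) ?_
    exact_mod_cast card_evalFun_eq_zero_le m r

end Moment

section Estimates

variable {m r K : ℕ}

theorem Real.exp_le_two_rpow {x : ℝ} (hx : 0 ≤ x) : Real.exp x ≤ 2 ^ (3 / 2 * x) := by
  rw [Real.rpow_def_of_pos (by norm_num)]
  gcongr
  nlinarith [Real.log_two_gt_d9]

theorem biasedCard_mul_exp_le {l : ℕ} (hr : 1 ≤ r) (hm : 2000 * r ≤ m) (hK : K ≤ binomLe m r)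
    (hl : 2 * (3 * (l + 1) + 4) ≤ m)
    (hD : 1000 * m * (9 / 8 : ℝ) ^ (l + 1) ≤ binomLe m r) :
    (biasedCard m r (l + 1) : ℝ) * Real.exp ((1 / 2) ^ (l + 1) * K) ≤
      2 ^ binomLe m r * (2 ^ m)⁻¹ := by
  set t := 3 * (l + 1) + 4 with ht
  set D : ℝ := (binomLe m r : ℝ) with hDdef
  have hD0 : 0 ≤ D := Nat.cast_nonneg _
  have hKD : (K : ℝ) ≤ D := by rw [hDdef]; exact_mod_cast hK
  have h1 : (biasedCard m r (l + 1) : ℝ) * 2 ^ (binomLe (m - t) r : ℝ) ≤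
      2 ^ (D * (1 / 16) ^ (l + 1) + D + m * t) := by
    have h := biasedCard_mul_le m r (l + 1)
    have h' : (biasedCard m r (l + 1) : ℝ) * 2 ^ binomLe (m - t) r ≤
        lowWeightCard m r (l + 1 + 1) * 2 ^ binomLe m r * (2 ^ m) ^ t := by exact_mod_cast h
    rw [Real.rpow_natCast]
    refine h'.trans ?_
    rw [Real.rpow_add (by norm_num), Real.rpow_add (by norm_num), hDdef, Real.rpow_natCast,
      Real.rpow_mul (by norm_num) (m : ℝ), Real.rpow_natCast, Real.rpow_natCast]
    gcongr
    exact lowWeightCard_le_rpow (l + 1) hr hm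
  have h2 : Real.exp ((1 / 2) ^ (l + 1) * K) ≤ 2 ^ (3 / 2 * ((1 / 2) ^ (l + 1) * D)) :=
    (Real.exp_le_two_rpow (by positivity)).trans <|
      Real.rpow_le_rpow_of_exponent_le (by norm_num) (by gcongr)
  have hsub : (499 / 500 : ℝ) ^ t * D ≤ binomLe (m - t) r :=
    pow_mul_binomLe_le_sub (by lia) (by lia)
  have hmain : 3 / 2 * (1 / 2 : ℝ) ^ (l + 1) + (1 / 16) ^ (l + 1) ≤
      9 / 10 * (499 / 500) ^ t := by
    rw [ht]
    clear * -
    induction l with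
    | zero => norm_num
    | succ l ih =>
      have e : 3 * (l + 1 + 1) + 4 = 3 * (l + 1) + 4 + 3 := by ring
      have hp : (0 : ℝ) < (499 / 500) ^ (3 * (l + 1) + 4) := by positivity
      have hq : (0 : ℝ) < (1 / 16) ^ (l + 1) := by positivity
      have h3 : (99 / 100 : ℝ) ≤ (499 / 500) ^ 3 := by norm_num
      rw [e, pow_add _ _ 3, pow_succ _ (l + 1), pow_succ _ (l + 1)]
      linarith [mul_le_mul_of_nonneg_left h3 hp.le]
  have hgrow : ((t : ℝ) + 1) * m ≤ 1 / 10 * (499 / 500) ^ t * D := by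
    have e1 : (99 / 100 : ℝ) * (99 / 100) ^ (l + 1) ≤ (499 / 500) ^ t := by
      rw [ht, pow_add _ (3 * (l + 1)) 4, pow_mul, mul_comm]
      gcongr <;> norm_num
    have e2 : (1 : ℝ) + (l + 1 : ℕ) * (1 / 10) ≤ (11 / 10) ^ (l + 1) := by
      have := one_add_mul_le_pow (a := (1 / 10 : ℝ)) (by norm_num) (l + 1)
      norm_num at this ⊢
      linarith
    have e3 : (11 / 10 : ℝ) ^ (l + 1) ≤ (99 / 100) ^ (l + 1) * (9 / 8) ^ (l + 1) := by
      rw [← mul_pow]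
      gcongr
      norm_num
    have htR : (t : ℝ) = 3 * ((l + 1 : ℕ) : ℝ) + 4 := by rw [ht]; push_cast; ring
    calc ((t : ℝ) + 1) * m ≤ 99 * (1 + (l + 1 : ℕ) * (1 / 10)) * m := by
          gcongr
          rw [htR]
          have : (0 : ℝ) ≤ (l + 1 : ℕ) := Nat.cast_nonneg _
          linarith
      _ ≤ 99 * ((99 / 100) ^ (l + 1) * (9 / 8) ^ (l + 1)) * m := by
          gcongr
          exact e2.trans e3
      _ = 1 / 10 * (99 / 100 * (99 / 100) ^ (l + 1)) * (1000 * m * (9 / 8) ^ (l + 1)) := by ring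
      _ ≤ _ := by gcongr
  have hexp : D * (1 / 16) ^ (l + 1) + D + m * t + 3 / 2 * ((1 / 2) ^ (l + 1) * D) ≤
      D - m + binomLe (m - t) r := by
    nlinarith [mul_le_mul_of_nonneg_right hmain hD0]
  have hpos : (0 : ℝ) < 2 ^ (binomLe (m - t) r : ℝ) := by positivity
  refine le_of_mul_le_mul_right ?_ hpos
  calc _ = (biasedCard m r (l + 1) : ℝ) * 2 ^ (binomLe (m - t) r : ℝ) *
          Real.exp ((1 / 2) ^ (l + 1) * K) := by ring
    _ ≤ 2 ^ (D * (1 / 16) ^ (l + 1) + D + m * t) * 2 ^ (3 / 2 * ((1 / 2) ^ (l + 1) * D)) := by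
        gcongr
    _ = 2 ^ (D * (1 / 16) ^ (l + 1) + D + m * t + 3 / 2 * ((1 / 2) ^ (l + 1) * D)) := by
        rw [Real.rpow_add (by norm_num) _ (3 / 2 * _)]
    _ ≤ 2 ^ (D - m + binomLe (m - t) r) :=
        Real.rpow_le_rpow_of_exponent_le (by norm_num) hexp
    _ = _ := by
        rw [Real.rpow_add (by norm_num), Real.rpow_sub (by norm_num), hDdef, Real.rpow_natCast,
          Real.rpow_natCast 2 m, div_eq_mul_inv]

theorem lowWeightCard_mul_pow_le {ε : ℝ} (hε : 0 < ε) (hε1 : ε < 1) (hr : 1 ≤ r)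
    (hm : 2000 * r ≤ m) (hK : (K : ℝ) ≤ (1 - ε) * binomLe m r) (i : ℕ) :
    (lowWeightCard m r (i + 2) : ℝ) * (2 * (1 - (1 / 2 : ℝ) ^ (i + 3))) ^ K ≤
      2 ^ binomLe m r * 2 ^ (-(ε / 2) * m) := by
  set D : ℝ := (binomLe m r : ℝ) with hD
  set x : ℝ := (1 / 2) ^ (i + 3) with hx
  have hx0 : 0 < x := by positivity
  have hx1 : x ≤ 1 / 8 := by
    calc x ≤ (1 / 2) ^ 3 := pow_le_pow_of_le_one (by norm_num) (by norm_num) (by lia)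
      _ = _ := by norm_num
  have hmD : (m : ℝ) ≤ D := by
    rw [hD]
    exact_mod_cast (Nat.le_succ m).trans (le_binomLe_one hr)
  have h1 : 2 * (1 - x) ≤ 2 ^ (1 - x) := by
    rw [Real.rpow_sub (by norm_num), Real.rpow_one, div_eq_mul_inv, ← Real.rpow_neg (by norm_num),
      Real.rpow_def_of_pos (by norm_num)]
    have := Real.add_one_le_exp (-x)
    have h2 : Real.exp (-x) ≤ Real.exp (Real.log 2 * -x) := by
      gcongr
      nlinarith [Real.log_two_lt_d9]
    linarith
  have h16 : (1 / 16 : ℝ) ^ (i + 1) ≤ x / 2 := by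
    have : (1 / 16 : ℝ) ^ i ≤ (1 / 2) ^ i := by gcongr; norm_num
    rw [hx, pow_succ, pow_add]
    norm_num at *
    linarith
  have hexp : D * (1 / 16) ^ (i + 1) + (1 - x) * K ≤ D + -(ε / 2) * m := by
    have hD0 : 0 ≤ D := Nat.cast_nonneg _
    have e1 : (1 - x) * K ≤ (1 - x) * ((1 - ε) * D) := by
      gcongr
      linarith
    have e2 : D * (1 / 16) ^ (i + 1) ≤ D * (x / 2) := by gcongr
    have e3 : x / 2 + (1 - x) * (1 - ε) ≤ 1 - ε / 2 := by nlinarith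
    have e4 := mul_le_mul_of_nonneg_left e3 hD0
    have e5 : ε / 2 * m ≤ ε / 2 * D := by gcongr
    linarith
  calc (lowWeightCard m r (i + 2) : ℝ) * (2 * (1 - x)) ^ K
      ≤ 2 ^ (D * (1 / 16) ^ (i + 1)) * (2 ^ (1 - x)) ^ K := by
        have : 0 ≤ 2 * (1 - x) := by linarith
        gcongr
        exact lowWeightCard_le_rpow (i + 1) hr hm
    _ = 2 ^ (D * (1 / 16) ^ (i + 1) + (1 - x) * K) := by
        rw [Real.rpow_add (by norm_num), Real.rpow_mul (by norm_num) _ (K : ℝ), Real.rpow_natCast]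
    _ ≤ 2 ^ (D + -(ε / 2) * m) := Real.rpow_le_rpow_of_exponent_le (by norm_num) hexp
    _ = _ := by rw [Real.rpow_add (by norm_num), hD, Real.rpow_natCast]

theorem two_pow_le_mul_rpow {ε : ℝ} (hε : 0 < ε) (hr : 1 ≤ r)
    (hK : (K : ℝ) ≤ (1 - ε) * binomLe m r) :
    (2 : ℝ) ^ K ≤ 2 ^ binomLe m r * 2 ^ (-(ε / 2) * m) := by
  have hmD : (m : ℝ) ≤ binomLe m r := by
    exact_mod_cast (Nat.le_succ m).trans (le_binomLe_one hr)
  have hm0 : (0 : ℝ) ≤ m := Nat.cast_nonneg _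
  rw [← Real.rpow_natCast 2 K, ← Real.rpow_natCast 2 (binomLe m r),
    ← Real.rpow_add (by norm_num)]
  exact Real.rpow_le_rpow_of_exponent_le (by norm_num) (by nlinarith)

theorem binomLe_pow_le_two_pow (hm : 2000 * r ≤ m) : binomLe m r ^ 16 ≤ 2 ^ m := by
  have h := binomLe_mul_pow_le m r (x := 1 / 32) (by norm_num) (by norm_num)
  have h32 : (32 : ℝ) ^ r * (1 / 32) ^ r = 1 := by rw [← mul_pow]; norm_num
  have h1 : (binomLe m r : ℝ) ≤ 32 ^ r * (33 / 32) ^ m := by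
    calc (binomLe m r : ℝ) = 32 ^ r * (binomLe m r * (1 / 32) ^ r) := by
          rw [mul_left_comm, h32, mul_one]
      _ ≤ 32 ^ r * (1 + 1 / 32) ^ m := by gcongr
      _ = _ := by norm_num
  have h33 : (33 / 32 : ℝ) ^ 400 ≤ 2 ^ 24 := by
    calc (33 / 32 : ℝ) ^ 400 = ((33 / 32) ^ 16) ^ 25 := by rw [← pow_mul]
      _ ≤ (41 / 25) ^ 25 := by gcongr; norm_num
      _ ≤ _ := by norm_num
  have h2 : ((binomLe m r : ℝ) ^ 16) ^ 25 ≤ (2 ^ m) ^ 25 := by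
    calc ((binomLe m r : ℝ) ^ 16) ^ 25 = (binomLe m r : ℝ) ^ 400 := by rw [← pow_mul]
      _ ≤ (32 ^ r * (33 / 32) ^ m) ^ 400 := by gcongr
      _ = 2 ^ (2000 * r) * ((33 / 32) ^ 400) ^ m := by
          rw [show (32 : ℝ) ^ r = 2 ^ (5 * r) by rw [pow_mul]; norm_num, mul_pow, ← pow_mul,
            ← pow_mul, ← pow_mul, mul_comm m]
          congr 2
          ring
      _ ≤ 2 ^ m * (2 ^ 24) ^ m := by
          gcongr
          norm_num
      _ = _ := by rw [← pow_mul, mul_comm 24, pow_mul, ← pow_succ']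
  have h3 := (pow_le_pow_iff_left₀ (by positivity) (by positivity) (by norm_num)).1 h2
  exact_mod_cast h3

theorem mul_pow_le_binomLe {ρ : ℝ} {l : ℕ} (hr : 2 ≤ r)
    (hm : 32 * 10 ^ 12 / ρ ≤ (m : ℝ) ^ 2) (hl : 2 ^ l ≤ 4 * (binomLe m r : ℝ) / ρ) :
    1000 * m * (9 / 8 : ℝ) ^ l ≤ binomLe m r := by
  set D : ℝ := (binomLe m r : ℝ) with hD
  have hD2 : (m : ℝ) ^ 2 ≤ 2 * D := by
    rw [hD]
    exact_mod_cast sq_le_two_mul_binomLe hr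
  have hD0 : 0 ≤ D := Nat.cast_nonneg _
  rw [← pow_le_pow_iff_left₀ (n := 4) (by positivity) hD0 (by norm_num)]
  have h1 : ((9 / 8 : ℝ) ^ l) ^ 4 ≤ 2 ^ l := by
    rw [← pow_mul, mul_comm, pow_mul]
    gcongr
    norm_num
  have h3 : 32 * 10 ^ 12 / ρ * (m : ℝ) ^ 4 ≤ 8 * D ^ 3 := by
    calc 32 * 10 ^ 12 / ρ * (m : ℝ) ^ 4 ≤ (m : ℝ) ^ 2 * (m : ℝ) ^ 4 := by gcongr
      _ = ((m : ℝ) ^ 2) ^ 3 := by ring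
      _ ≤ (2 * D) ^ 3 := by gcongr
      _ = _ := by ring
  calc _ = 10 ^ 12 * m ^ 4 * ((9 / 8 : ℝ) ^ l) ^ 4 := by ring
    _ ≤ 10 ^ 12 * m ^ 4 * (4 * D / ρ) := by
        gcongr
        exact h1.trans hl
    _ = 32 * 10 ^ 12 / ρ * m ^ 4 * D / 8 := by ring
    _ ≤ 8 * D ^ 3 * D / 8 := by gcongr
    _ = _ := by ring

theorem eight_mul_le_of_two_pow_le {ρ : ℝ} {L : ℕ} (hm : 2000 * r ≤ m)
    (hmρ : (4 / ρ) ^ 16 ≤ 2 ^ m) (hL : 2 ^ L ≤ 4 * (binomLe m r : ℝ) / ρ) : 8 * L ≤ m := by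
  have h1 : (2 : ℝ) ^ (16 * L) ≤ 2 ^ (2 * m) := by
    calc (2 : ℝ) ^ (16 * L) = (2 ^ L) ^ 16 := by rw [mul_comm, pow_mul]
      _ ≤ (4 * (binomLe m r : ℝ) / ρ) ^ 16 := by gcongr
      _ = (4 / ρ) ^ 16 * binomLe m r ^ 16 := by ring
      _ ≤ 2 ^ m * 2 ^ m := by
          gcongr
          exact_mod_cast binomLe_pow_le_two_pow hm
      _ = _ := by ring
  have := (pow_le_pow_iff_right₀ (by norm_num)).1 h1
  lia

end Estimates

section Moment

variable {m r K : ℕ} {ε ρ : ℝ}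

theorem sum_one_add_bias_pow_le_mul (hε : 0 < ε) (hε1 : ε < 1) (hρ : 0 < ρ) (hρ1 : ρ ≤ 1)
    (hr : 2 ≤ r) (hrm : 2000 * r ≤ m) (hK : (K : ℝ) ≤ (1 - ε) * binomLe m r)
    (hm : 32 ≤ m) (hmρ : (4 / ρ) ^ 16 ≤ 2 ^ m) (hmsq : 32 * 10 ^ 12 / ρ ≤ (m : ℝ) ^ 2)
    (hm2 : m * ((2 : ℝ) ^ m)⁻¹ ≤ ρ / 8)
    (hmε : ((m : ℝ) + 1) * 2 ^ (-(ε / 2) * m) ≤ ρ / 8) :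
    ∑ c : RMcode m r, (1 + bias (evalFun m r c)) ^ K ≤ (1 + ρ) * 2 ^ binomLe m r := by
  set D := binomLe m r with hD
  have hr1 : 1 ≤ r := by lia
  have hmD : m + 1 ≤ D := le_binomLe_one hr1
  have hDR : (1 : ℝ) ≤ D := by exact_mod_cast (by lia : 1 ≤ D)
  have hKD' : (K : ℝ) ≤ D := hK.trans (mul_le_of_le_one_left (by positivity) (by linarith))
  have hKD : K ≤ D := by exact_mod_cast hKD'
  set M : ℝ := 4 * D / ρ with hM
  have hM1 : 1 ≤ M := by
    rw [hM, le_div_iff₀ hρ]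
    linarith
  set L := Nat.log 2 ⌊M⌋₊ with hL
  have hML : M < 2 ^ (L + 1) := by
    exact_mod_cast (Nat.floor_lt (by linarith)).1 (Nat.lt_pow_succ_log_self one_lt_two ⌊M⌋₊)
  have hLM : (2 : ℝ) ^ L ≤ M := by
    have h := Nat.pow_log_le_self 2 (x := ⌊M⌋₊) (Nat.floor_pos.2 hM1).ne'
    calc (2 : ℝ) ^ L ≤ ⌊M⌋₊ := by exact_mod_cast h
      _ ≤ M := Nat.floor_le (by linarith)
  have hLm : 8 * L ≤ m := eight_mul_le_of_two_pow_le hrm hmρ hLM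
  have hA : Real.exp ((1 / 2) ^ (L + 1) * K) ≤ 1 + ρ / 2 := by
    have h1 : (1 / 2 : ℝ) ^ (L + 1) * K ≤ ρ / 4 := by
      rw [one_div, inv_pow, inv_mul_le_iff₀ (by positivity)]
      have h2 : (D : ℝ) = M * (ρ / 4) := by rw [hM]; field_simp
      calc (K : ℝ) ≤ M * (ρ / 4) := h2 ▸ hKD'
        _ ≤ _ := by gcongr
    have h3 := Real.abs_exp_sub_one_sub_id_le (x := ρ / 4)
      (by rw [abs_of_pos (by positivity)]; linarith)
    have h4 := (abs_le.1 h3).2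
    calc _ ≤ Real.exp (ρ / 4) := Real.exp_le_exp.2 h1
      _ ≤ _ := by nlinarith
  have hbias : ∑ l ∈ range L, biasedCard m r (l + 1) * Real.exp ((1 / 2) ^ (l + 1) * K) ≤
      2 ^ D * (ρ / 8) := by
    calc _ ≤ ∑ l ∈ range L, (2 : ℝ) ^ D * (2 ^ m)⁻¹ := by
          refine sum_le_sum fun l hl => biasedCard_mul_exp_le hr1 hrm hKD ?_ ?_
          · have := mem_range.1 hl
            lia
          · refine mul_pow_le_binomLe hr hmsq (le_trans ?_ hLM)
            gcongr
            · norm_num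
            · exact mem_range.1 hl
      _ = 2 ^ D * (L * (2 ^ m)⁻¹) := by rw [sum_const, card_range, nsmul_eq_mul]; ring
      _ ≤ 2 ^ D * (m * (2 ^ m)⁻¹) := by
          gcongr
          lia
      _ ≤ _ := by gcongr
  have hlow : ∑ i ∈ range r, lowWeightCard m r (i + 2) * (2 * (1 - (1 / 2 : ℝ) ^ (i + 3))) ^ K +
      2 ^ K ≤ 2 ^ D * (ρ / 8) := by
    calc _ ≤ ∑ i ∈ range r, (2 : ℝ) ^ D * 2 ^ (-(ε / 2) * m) + 2 ^ D * 2 ^ (-(ε / 2) * m) :=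
          add_le_add (sum_le_sum fun i _ => lowWeightCard_mul_pow_le hε hε1 hr1 hrm hK i)
            (two_pow_le_mul_rpow hε hr1 hK)
      _ = 2 ^ D * ((r + 1) * 2 ^ (-(ε / 2) * m)) := by
          rw [sum_const, card_range, nsmul_eq_mul]; ring
      _ ≤ 2 ^ D * ((m + 1) * 2 ^ (-(ε / 2) * m)) := by
          gcongr
          lia
      _ ≤ _ := by gcongr
  have hpos : (0 : ℝ) < 2 ^ D := by positivity
  have := sum_one_add_bias_pow_le (m := m) hr1 hA
  nlinarith [mul_pos hpos hρ]

theorem eventually_bounds (hε : 0 < ε) (hρ : 0 < ρ) : ∀ᶠ m : ℕ in Filter.atTop,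
    32 ≤ m ∧ (4 / ρ) ^ 16 ≤ 2 ^ m ∧ 32 * 10 ^ 12 / ρ ≤ (m : ℝ) ^ 2 ∧
      m * ((2 : ℝ) ^ m)⁻¹ ≤ ρ / 8 ∧ ((m : ℝ) + 1) * 2 ^ (-(ε / 2) * m) ≤ ρ / 8 := by
  have hρ8 : 0 < ρ / 8 := by positivity
  have geom {x : ℝ} (h0 : 0 ≤ x) (h1 : x < 1) :
      Filter.Tendsto (fun n : ℕ => n * x ^ n) Filter.atTop (nhds 0) :=
    tendsto_self_mul_const_pow_of_lt_one h0 h1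
  refine (Filter.eventually_ge_atTop 32).and (Filter.Eventually.and ?_
    (Filter.Eventually.and ?_ (Filter.Eventually.and ?_ ?_)))
  · exact (tendsto_pow_atTop_atTop_of_one_lt one_lt_two).eventually_ge_atTop _
  · exact ((Filter.tendsto_pow_atTop two_ne_zero).comp
      tendsto_natCast_atTop_atTop).eventually_ge_atTop _
  · filter_upwards [(geom (x := 1 / 2) (by norm_num) (by norm_num)).eventually_le_const hρ8]
      with m hm
    rwa [one_div, inv_pow] at hm
  · have hx : (2 : ℝ) ^ (-(ε / 2)) < 1 :=
      Real.rpow_lt_one_of_one_lt_of_neg one_lt_two (by linarith)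
    have hx0 : (0 : ℝ) ≤ 2 ^ (-(ε / 2)) := by positivity
    have h := (geom hx0 hx).add (tendsto_pow_atTop_nhds_zero_of_lt_one hx0 hx)
    rw [add_zero] at h
    filter_upwards [h.eventually_le_const hρ8] with m hm
    rw [Real.rpow_mul (by norm_num), Real.rpow_natCast]
    linarith

end Moment

/-- expected size of the vanishing space of a random set.
There is an absolute constant `γ₀ > 0` such that for every `ε ∈ (0,1)` and `ρ > 0`
there is `m₀` such that for all `m ≥ m₀` and `1 ≤ r < γ₀ m`, setting
`K = ⌊(1-ε)·binom(m,≤r)⌋`, the expectation over a uniformly random `K`-element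
subset `Z ⊆ F₂^m` of `|I_r(Z)| / 2^{binom(m,≤r)}` lies between `2^{-K}` and
`2^{-K}·(1+ρ)`. -/
theorem expected_size_vanishing_space :
    ∃ γ₀ : ℝ, 0 < γ₀ ∧
      ∀ ε : ℝ, 0 < ε → ε < 1 →
        ∀ ρ : ℝ, 0 < ρ →
          ∃ m₀ : ℕ, ∀ m : ℕ, m₀ ≤ m →
            ∀ r : ℕ, 1 ≤ r → (r : ℝ) < γ₀ * m →
              ∀ K : ℕ, K = ⌊(1 - ε) * (binomLe m r : ℝ)⌋₊ →
                ((2 : ℝ) ^ K)⁻¹ ≤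
                    (∑ Z ∈ (Finset.univ : Finset (Fin m → ZMod 2)).powersetCard K,
                        (Nat.card ↥(vanishing m r (Z : Set (Fin m → ZMod 2))) : ℝ) /
                          2 ^ binomLe m r) /
                      (((Finset.univ : Finset (Fin m → ZMod 2)).powersetCard K).card : ℝ) ∧
                  (∑ Z ∈ (Finset.univ : Finset (Fin m → ZMod 2)).powersetCard K,
                        (Nat.card ↥(vanishing m r (Z : Set (Fin m → ZMod 2))) : ℝ) /
                          2 ^ binomLe m r) /
                      (((Finset.univ : Finset (Fin m → ZMod 2)).powersetCard K).card : ℝ) ≤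
                    ((2 : ℝ) ^ K)⁻¹ * (1 + ρ) := by
  refine ⟨1 / 2000, by norm_num, fun ε hε hε1 ρ hρ => ?_⟩
  have hρ' : 0 < min ρ 1 := lt_min hρ one_pos
  obtain ⟨m₀, hm₀⟩ := Filter.eventually_atTop.1 (eventually_bounds hε hρ')
  refine ⟨m₀, fun m hm r hr hrm K hK => ?_⟩
  obtain ⟨h32, hmρ, hmsq, hm2, hmε⟩ := hm₀ m hm
  have hrm' : 2000 * r ≤ m := by
    have : 2000 * (r : ℝ) ≤ m := by linarith
    exact_mod_cast this
  have hD0 : (0 : ℝ) ≤ binomLe m r := Nat.cast_nonneg _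
  have hKε : (K : ℝ) ≤ (1 - ε) * binomLe m r := by
    rw [hK]
    exact Nat.floor_le (mul_nonneg (by linarith) hD0)
  have hKD : K ≤ binomLe m r := by
    have : (K : ℝ) ≤ binomLe m r := hKε.trans (mul_le_of_le_one_left hD0 (by linarith))
    exact_mod_cast this
  refine ⟨inv_le_expectation hKD, (expectation_le_inv_mul_sum hKD).trans ?_⟩
  gcongr
  rw [div_le_iff₀ (by positivity)]
  refine le_trans ?_ (mul_le_mul_of_nonneg_right (add_le_add_right (min_le_left ρ 1) 1)
    (by positivity))
  rcases hr.eq_or_lt with rfl | hr2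
  · have h1 := sum_one_add_bias_pow_one_le m K
    have h2 := two_pow_le_mul_rpow hε le_rfl hKε
    have h3 : (2 : ℝ) ^ (-(ε / 2) * m) ≤ min ρ 1 := by
      have : (0 : ℝ) ≤ m * 2 ^ (-(ε / 2) * (m : ℝ)) := by positivity
      linarith
    calc _ ≤ _ := h1
      _ ≤ 2 ^ binomLe m 1 + 2 ^ binomLe m 1 * min ρ 1 := by
          gcongr
          exact h2.trans (by gcongr)
      _ = _ := by ring
  · exact sum_one_add_bias_pow_le_mul hε hε1 hρ' (min_le_right _ _) hr2 hrm' hKε h32 hmρ hmsq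
      hm2 hmε
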